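/- Let M be a countable transitive model of ZF⁻ in which every set is countable, let ℙ be the forcing whose conditions are partial functions from ω to 2 in M ordered by reverse inclusion, and let ℚ be the finite support product of ω-many copies of ℙ. Then ℚ does not satisfy the forcing theorem over 𝕄 = ⟨M, 𝒞⟩: if it did, one could define over M a truth predicate for first-order truth in M, contradicting Tarski's theorem on the undefinability of truth. -/

import Mathlib

noncomputable section

namespace CF

attribute [local instance] Classical.propDecidable

/-! ### First-order formulas of the language of set theory -/

/-- First-order `∈`-formulas with variables indexed by `ℕ`. -/
inductive EFormula : Type
  | mem : ℕ → ℕ → EFormula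
  | eq : ℕ → ℕ → EFormula
  | not : EFormula → EFormula
  | or : EFormula → EFormula → EFormula
  | ex : ℕ → EFormula → EFormula

/-- Satisfaction of an `∈`-formula in the structure `⟨D, ∈⟩` under assignment `v`. -/
def EFormula.Sat (D : Set ZFSet) (v : ℕ → ZFSet) : EFormula → Prop
  | .mem i j => v i ∈ v j
  | .eq i j => v i = v j
  | .not φ => ¬ EFormula.Sat D v φ
  | .or φ ψ => EFormula.Sat D v φ ∨ EFormula.Sat D v ψ
  | .ex i φ => ∃ x ∈ D, EFormula.Sat D (Function.update v i x) φ

/-- All variables occurring in the formula are `< m`. -/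
def EFormula.VarsLt (m : ℕ) : EFormula → Prop
  | .mem i j => i < m ∧ j < m
  | .eq i j => i < m ∧ j < m
  | .not φ => EFormula.VarsLt m φ
  | .or φ ψ => EFormula.VarsLt m φ ∧ EFormula.VarsLt m ψ
  | .ex i φ => i < m ∧ EFormula.VarsLt m φ

/-- First-order formulas of the two-sorted language of `GB⁻`: set variables indexed by `ℕ`,
class parameters indexed by `ℕ`, and only set quantifiers. -/
inductive GBFormula : Type
  | mem : ℕ → ℕ → GBFormula
  | eq : ℕ → ℕ → GBFormula
  | cls : ℕ → ℕ → GBFormula    -- `vᵢ ∈ C_j`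
  | not : GBFormula → GBFormula
  | or : GBFormula → GBFormula → GBFormula
  | ex : ℕ → GBFormula → GBFormula

/-- Satisfaction of a `GBFormula` with set quantifiers ranging over `Mset`,
class parameters `Cs` and set assignment `v`. -/
def GBFormula.Sat (Mset : Set ZFSet) (Cs : ℕ → Set ZFSet) (v : ℕ → ZFSet) : GBFormula → Prop
  | .mem i j => v i ∈ v j
  | .eq i j => v i = v j
  | .cls i j => v i ∈ Cs j
  | .not φ => ¬ GBFormula.Sat Mset Cs v φ
  | .or φ ψ => GBFormula.Sat Mset Cs v φ ∨ GBFormula.Sat Mset Cs v ψ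
  | .ex i φ => ∃ x ∈ Mset, GBFormula.Sat Mset Cs (Function.update v i x) φ

/-! ### Countable transitive models of GB⁻ -/

/-- A countable transitive second-order model `𝕄 = ⟨M, 𝒞⟩` of `GB⁻`:
`M` is transitive and countable, classes are subsets of `M`, sets are classes, and the axioms
of `GB⁻` hold (extensionality and foundation are automatic for `ZFSet`; the set axioms of `ZF⁻`
with separation and collection allowing class parameters, together with first-order class
comprehension, are listed). -/
structure GBModel.{u_1} where
  M : Set ZFSet.{u_1}
  Cls : Set (Set ZFSet)
  countable_M : M.Countable
  countable_Cls : Cls.Countable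
  transitive : ∀ x ∈ M, ∀ y : ZFSet, y ∈ x → y ∈ M
  sets_are_classes : ∀ x ∈ M, x.toSet ∈ Cls
  classes_sub : ∀ C ∈ Cls, C ⊆ M
  empty_mem : (∅ : ZFSet) ∈ M
  pair_mem : ∀ x ∈ M, ∀ y ∈ M, ({x, y} : ZFSet) ∈ M
  sUnion_mem : ∀ x ∈ M, (ZFSet.sUnion x : ZFSet) ∈ M
  omega_mem : ZFSet.omega ∈ M
  comprehension : ∀ (φ : GBFormula) (v : ℕ → ZFSet) (Cs : ℕ → Set ZFSet),
    (∀ n, v n ∈ M) → (∀ n, Cs n ∈ Cls) →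
    {x : ZFSet | x ∈ M ∧ GBFormula.Sat M Cs (Function.update v 0 x) φ} ∈ Cls
  separation : ∀ C ∈ Cls, ∀ a ∈ M, ∃ b ∈ M, ∀ x : ZFSet, x ∈ b ↔ x ∈ a ∧ x ∈ C
  collection : ∀ C ∈ Cls, ∀ a ∈ M,
    (∀ x : ZFSet, x ∈ a → ∃ y ∈ M, x.pair y ∈ C) →
    ∃ b ∈ M, ∀ x : ZFSet, x ∈ a → ∃ y : ZFSet, y ∈ b ∧ x.pair y ∈ C

/-- A notion of class forcing `ℙ = ⟨P, ≤_ℙ⟩` for `𝕄`: a partial order (with maximal element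
`𝟙_ℙ`) whose domain and order relation are classes of `𝕄`. -/
structure ClassForcing (𝕄 : GBModel) where
  P : Set ZFSet
  le : ZFSet → ZFSet → Prop
  one : ZFSet
  one_mem : one ∈ P
  le_one : ∀ p ∈ P, le p one
  le_refl : ∀ p ∈ P, le p p
  le_trans : ∀ p q r : ZFSet, le p q → le q r → le p r
  P_cls : P ∈ 𝕄.Cls
  le_cls : {x : ZFSet | ∃ p ∈ P, ∃ q ∈ P, le p q ∧ x = p.pair q} ∈ 𝕄.Cls

/-! ### Names and their evaluation -/

/-- Auxiliary rank-bounded version of `IsName`. -/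
def IsNameAux (S : Set ZFSet) (o : Ordinal) (σ : ZFSet) : Prop :=
  ∀ x ∈ σ.toSet, ∃ τ p : ZFSet, x = τ.pair p ∧ p ∈ S ∧
    ∃ _h : τ.rank < o, IsNameAux S τ.rank τ
termination_by o

/-- `σ` is a `ℙ`-name (for the forcing with conditions `S`): every element of `σ` is a pair
`⟨τ, p⟩` with `τ` a `ℙ`-name and `p ∈ S`. -/
def IsName (S : Set ZFSet) (σ : ZFSet) : Prop := IsNameAux S σ.rank σ

/-- Image of a ZFSet under an arbitrary function (using choice for definability). -/
def zimage (f : ZFSet → ZFSet) (x : ZFSet) : ZFSet :=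
  @ZFSet.image f (Classical.allZFSetDefinable _) x

/-- Auxiliary rank-bounded version of the evaluation `σ^G` of a name by a filter. -/
def nameEvalAux (G : Set ZFSet) (o : Ordinal) (σ : ZFSet) : ZFSet :=
  zimage (fun τ => if h : τ.rank < o then nameEvalAux G τ.rank τ else ∅)
    (ZFSet.sep (fun τ => ∃ p, p ∈ G ∧ τ.pair p ∈ σ) (ZFSet.sUnion (ZFSet.sUnion σ)))
termination_by o
decreasing_by exact h

/-- The evaluation `σ^G = {τ^G | ∃ p ∈ G, ⟨τ, p⟩ ∈ σ}` of a name `σ` by a filter `G`. -/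
def nameEval (G : Set ZFSet) (σ : ZFSet) : ZFSet := nameEvalAux G σ.rank σ

/-- Auxiliary rank-bounded version of `nameTC`. -/
def nameTCAux (o : Ordinal) (σ : ZFSet) : Set ZFSet :=
  {x | ∃ τ p : ZFSet, τ.pair p ∈ σ ∧ (x = p ∨ ∃ _h : τ.rank < o, x ∈ nameTCAux τ.rank τ)}
termination_by o

/-- The set `tc(σ) = ⋃ {{p} ∪ tc(τ) | ⟨τ,p⟩ ∈ σ}` of conditions appearing in the transitive
closure of the name `σ`. -/
def nameTC (σ : ZFSet) : Set ZFSet := nameTCAux σ.rank σ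

/-! ### Filters, genericity, generic extensions -/

/-- `G` is a filter on the partial order with domain `S` and ordering `le`. -/
def IsFilterOn (S : Set ZFSet) (le : ZFSet → ZFSet → Prop) (G : Set ZFSet) : Prop :=
  G ⊆ S ∧ G.Nonempty ∧ (∀ p ∈ G, ∀ q ∈ S, le p q → q ∈ G) ∧
    ∀ p ∈ G, ∀ q ∈ G, ∃ r ∈ G, le r p ∧ le r q

/-- `D` is a dense subclass of the partial order `⟨S, le⟩`. -/
def DenseIn (S : Set ZFSet) (le : ZFSet → ZFSet → Prop) (D : Set ZFSet) : Prop :=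
  D ⊆ S ∧ ∀ p ∈ S, ∃ q ∈ D, le q p

/-- `G` is a generic filter on `⟨S, le⟩` over `𝕄`: a filter meeting every dense subclass
of `⟨S, le⟩` lying in `𝒞`. -/
def IsGeneric (𝕄 : GBModel) (S : Set ZFSet) (le : ZFSet → ZFSet → Prop) (G : Set ZFSet) : Prop :=
  IsFilterOn S le G ∧ ∀ D ∈ 𝕄.Cls, DenseIn S le D → (G ∩ D).Nonempty

/-- The generic extension `M[G] = {σ^G | σ ∈ M a name for the forcing with domain S}`. -/
def MGen (𝕄 : GBModel) (S : Set ZFSet) (G : Set ZFSet) : Set ZFSet :=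
  {x | ∃ σ : ZFSet, σ ∈ 𝕄.M ∧ IsName S σ ∧ nameEval G σ = x}

/-! ### Compatibility, the set decision property -/

/-- `p` and `q` are compatible in `⟨S, le⟩`. -/
def Compat (S : Set ZFSet) (le : ZFSet → ZFSet → Prop) (p q : ZFSet) : Prop :=
  ∃ r ∈ S, le r p ∧ le r q

/-- `p ≤* q` : every extension of `p` is compatible with `q`. -/
def leStar (S : Set ZFSet) (le : ZFSet → ZFSet → Prop) (p q : ZFSet) : Prop :=
  ∀ r ∈ S, le r p → Compat S le r q

/-- `p` decides the set of conditions `A`: for every `a ∈ A`, either `p ≤* a` or `p ⊥ a`. -/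
def Decides (S : Set ZFSet) (le : ZFSet → ZFSet → Prop) (p A : ZFSet) : Prop :=
  ∀ a : ZFSet, a ∈ A → leStar S le p a ∨ ¬ Compat S le p a

/-- The set decision property: every set of conditions in `M` is decided densely. -/
def SetDecisionProperty (𝕄 : GBModel) (F : ClassForcing 𝕄) : Prop :=
  ∀ p ∈ F.P, ∀ A : ZFSet, A ∈ 𝕄.M → (∀ a : ZFSet, a ∈ A → a ∈ F.P) →
    ∃ q ∈ F.P, F.le q p ∧ Decides F.P F.le q A

/-! ### The forcing theorem -/

/-- Encode a finite list of sets as a single set by iterated Kuratowski pairing. -/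
def listEncode : List ZFSet → ZFSet
  | [] => ∅
  | a :: l => a.pair (listEncode l)

/-- The assignment sending variable `n < m` to `σₙ^G` (and `∅` beyond `m`). -/
def namesAssign (G : Set ZFSet) (m : ℕ) (σs : Fin m → ZFSet) : ℕ → ZFSet :=
  fun n => if h : n < m then nameEval G (σs ⟨n, h⟩) else ∅

/-- `p ⊩_ℙ φ(σ₀, …, σ_{m-1})` : for every generic `G ∋ p`, `M[G] ⊨ φ(σ₀^G, …, σ_{m-1}^G)`. -/
def Forces (𝕄 : GBModel) (F : ClassForcing 𝕄) (φ : EFormula) (m : ℕ) (p : ZFSet)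
    (σs : Fin m → ZFSet) : Prop :=
  ∀ G : Set ZFSet, IsGeneric 𝕄 F.P F.le G → p ∈ G →
    EFormula.Sat (MGen 𝕄 F.P G) (namesAssign G m σs) φ

/-- `ℙ` satisfies the forcing theorem over `𝕄`: for every `∈`-formula `φ(v₀,…,v_{m-1})`,
the forcing relation is a class of `𝕄` (definability lemma) and everything true in a generic
extension is forced by a condition in the generic filter (truth lemma). -/
def SatisfiesForcingTheorem (𝕄 : GBModel) (F : ClassForcing 𝕄) : Prop :=
  ∀ (φ : EFormula) (m : ℕ), EFormula.VarsLt m φ →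
    ({x : ZFSet | ∃ p ∈ F.P, ∃ σs : Fin m → ZFSet,
        (∀ i, σs i ∈ 𝕄.M ∧ IsName F.P (σs i)) ∧
        Forces 𝕄 F φ m p σs ∧
        x = p.pair (listEncode (List.ofFn σs))} ∈ 𝕄.Cls) ∧
    ∀ σs : Fin m → ZFSet, (∀ i, σs i ∈ 𝕄.M ∧ IsName F.P (σs i)) →
      ∀ G : Set ZFSet, IsGeneric 𝕄 F.P F.le G →
        EFormula.Sat (MGen 𝕄 F.P G) (namesAssign G m σs) φ →
        ∃ p ∈ G, Forces 𝕄 F φ m p σs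

/-! ### Complete subforcings, the set reduction property -/

/-- `A` is an antichain of the partial order `⟨S, le⟩`. -/
def IsAntichainIn (S : Set ZFSet) (le : ZFSet → ZFSet → Prop) (A : Set ZFSet) : Prop :=
  A ⊆ S ∧ ∀ p ∈ A, ∀ q ∈ A, p ≠ q → ¬ Compat S le p q

/-- `A` is a maximal antichain of the partial order `⟨S, le⟩`. -/
def IsMaxAntichainIn (S : Set ZFSet) (le : ZFSet → ZFSet → Prop) (A : Set ZFSet) : Prop :=
  IsAntichainIn S le A ∧ ∀ p ∈ S, ∃ a ∈ A, Compat S le p a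

/-- `ℚ ⊲∘ ℙ` : `Q` is a set-sized complete subforcing of `ℙ` (with the induced ordering):
`Q ∈ M`, `Q ⊆ P`, `𝟙 ∈ Q`, and every maximal antichain of `ℚ` in `M` is predense in `ℙ`. -/
def IsCompleteSub (𝕄 : GBModel) (F : ClassForcing 𝕄) (Q : ZFSet) : Prop :=
  Q ∈ 𝕄.M ∧ Q.toSet ⊆ F.P ∧ F.one ∈ Q ∧
    ∀ A : ZFSet, A ∈ 𝕄.M → A.toSet ⊆ Q.toSet → IsMaxAntichainIn Q.toSet F.le A.toSet →
      ∀ p ∈ F.P, ∃ a : ZFSet, a ∈ A ∧ Compat F.P F.le p a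

/-- `ℚ^{∥q}` : the conditions of `Q` compatible with `q` in `ℙ`. -/
def QPar (𝕄 : GBModel) (F : ClassForcing 𝕄) (Q : ZFSet) (q : ZFSet) : Set ZFSet :=
  {r | r ∈ Q ∧ Compat F.P F.le r q}

/-- The property `(*)(A, q, ℚ)`: for every `a ∈ A`, the set of `r ∈ ℚ^{∥q}` such that either
all `s ≤ q, r` satisfy `s ≤* a`, or all `s ≤ q, r` satisfy `s ⊥ a`, is dense in `ℚ^{∥q}`. -/
def StarProp (𝕄 : GBModel) (F : ClassForcing 𝕄) (A q Q : ZFSet) : Prop :=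
  ∀ a : ZFSet, a ∈ A → ∀ r₀ ∈ QPar 𝕄 F Q q, ∃ r₁ ∈ QPar 𝕄 F Q q, F.le r₁ r₀ ∧
    ((∀ s ∈ F.P, F.le s q → F.le s r₁ → leStar F.P F.le s a) ∨
      (∀ s ∈ F.P, F.le s q → F.le s r₁ → ¬ Compat F.P F.le s a))

/-- The set reduction property. -/
def SetReductionProperty (𝕄 : GBModel) (F : ClassForcing 𝕄) : Prop :=
  ∀ A : ZFSet, A ∈ 𝕄.M → (∀ a : ZFSet, a ∈ A → a ∈ F.P) →
    ∀ p ∈ F.P, ∃ q ∈ F.P, F.le q p ∧ ∃ Q : ZFSet, IsCompleteSub 𝕄 F Q ∧ StarProp 𝕄 F A q Q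

/-- Every new set added by `ℙ` is added by a set-sized complete subforcing of `ℙ`. -/
def EveryNewSetBySub (𝕄 : GBModel) (F : ClassForcing 𝕄) : Prop :=
  ∀ G : Set ZFSet, IsGeneric 𝕄 F.P F.le G →
    ∀ x : ZFSet, x ∈ MGen 𝕄 F.P G → x ∉ 𝕄.M →
      ∃ Q : ZFSet, IsCompleteSub 𝕄 F Q ∧ x ∈ MGen 𝕄 Q.toSet (G ∩ Q.toSet)

/-! ### The q-reduction of a name -/

/-- First component of a Kuratowski pair (junk value `∅` otherwise). -/
def fstZ (x : ZFSet) : ZFSet :=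
  if h : ∃ a b : ZFSet, x = a.pair b then h.choose else ∅

/-- Second component of a Kuratowski pair (junk value `∅` otherwise). -/
def sndZ (x : ZFSet) : ZFSet :=
  if h : ∃ a b : ZFSet, x = a.pair b then h.choose_spec.choose else ∅

/-- Cartesian product of two `ZFSet`s. -/
def zprod (a b : ZFSet) : ZFSet :=
  ZFSet.sep (fun x => ∃ u v : ZFSet, u ∈ a ∧ v ∈ b ∧ x = u.pair v)
    (ZFSet.powerset (ZFSet.powerset (a ∪ b)))

/-- Auxiliary rank-bounded version of the `q`-reduction of a name to `Q`. -/
def reduceAux (S : Set ZFSet) (le : ZFSet → ZFSet → Prop) (Q q : ZFSet) (o : Ordinal)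
    (σ : ZFSet) : ZFSet :=
  zimage
    (fun x =>
      (if h : (fstZ x).rank < o then reduceAux S le Q q (fstZ x).rank (fstZ x) else ∅).pair
        (sndZ x))
    (ZFSet.sep
      (fun x => ∃ τ r : ZFSet, x = τ.pair r ∧ r ∈ Q ∧
        ∃ a : ZFSet, τ.pair a ∈ σ ∧ ∀ s ∈ S, le s q → le s r → leStar S le s a)
      (zprod (ZFSet.sUnion (ZFSet.sUnion σ)) Q))
termination_by o
decreasing_by exact h

/-- The `q`-reduction `σ_q^ℚ = {⟨τ_q^ℚ, r⟩ | r ∈ ℚ ∧ ∃a (⟨τ,a⟩ ∈ σ ∧ ∀ s ≤ q,r (s ≤* a))}`. -/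
def reduceName (S : Set ZFSet) (le : ZFSet → ZFSet → Prop) (Q q σ : ZFSet) : ZFSet :=
  reduceAux S le Q q σ.rank σ

/-! ### Projections -/

/-- `f` is a projection from `⟨S, le⟩` (with maximum `one`) onto the subforcing with domain
`Qs`, respecting `X`. -/
def IsProjectionResp (S : Set ZFSet) (le : ZFSet → ZFSet → Prop) (one : ZFSet)
    (Qs X : Set ZFSet) (f : ZFSet → ZFSet) : Prop :=
  (∀ p ∈ S, f p ∈ Qs) ∧
  f one = one ∧
  (∀ p ∈ S, ∀ q ∈ S, le p q → le (f p) (f q)) ∧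
  (∀ p ∈ S, ∀ q ∈ Qs, le q (f p) → ∃ r ∈ S, le r p ∧ le (f r) q) ∧
  (∀ p ∈ X, ∀ q ∈ S, le (f q) p → le q p) ∧
  (∀ p ∈ X, f p = p)

/-- `ℙ` is approachable by projections: there is a class `Π ∈ 𝒞` whose sections `π_{X,y}`
are such that for every set `X ⊆ ℙ` there are a set `y` and a set-sized subforcing `ℚ ⊇ X ∪ {𝟙}`
of `ℙ` with `π_{X,y} : ℙ → ℚ` a projection respecting `X`. -/
def ApproachableByProjections (𝕄 : GBModel) (F : ClassForcing 𝕄) : Prop :=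
  ∃ Pi ∈ 𝕄.Cls, ∀ X : ZFSet, X ∈ 𝕄.M → (∀ x : ZFSet, x ∈ X → x ∈ F.P) →
    ∃ y ∈ 𝕄.M, ∃ Q : ZFSet, Q ∈ 𝕄.M ∧ Q.toSet ⊆ F.P ∧ (∀ x : ZFSet, x ∈ X → x ∈ Q) ∧
      F.one ∈ Q ∧ ∃ f : ZFSet → ZFSet,
        (∀ u ∈ F.P, ∀ v : ZFSet, (f u = v ↔ X.pair (y.pair (u.pair v)) ∈ Pi)) ∧
        IsProjectionResp F.P F.le F.one Q.toSet X.toSet f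

/-- `p ⊩ σ ⊆ τ` for the forcing with domain `S` and ordering `le`. -/
def ForcesSubset (𝕄 : GBModel) (S : Set ZFSet) (le : ZFSet → ZFSet → Prop)
    (p σ τ : ZFSet) : Prop :=
  ∀ G : Set ZFSet, IsGeneric 𝕄 S le G → p ∈ G → nameEval G σ ⊆ nameEval G τ

/-! ### Bounded names, turning proper classes into sets -/

/-- The possible values of the name `σ` in generic extensions. -/
def PossibleValues (𝕄 : GBModel) (S : Set ZFSet) (le : ZFSet → ZFSet → Prop)
    (σ : ZFSet) : Set ZFSet :=
  {x | ∃ G : Set ZFSet, IsGeneric 𝕄 S le G ∧ nameEval G σ = x}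

/-- The name `σ` is bounded: some `A ∈ M` covers all its possible values lying in `M`. -/
def IsBoundedName (𝕄 : GBModel) (F : ClassForcing 𝕄) (σ : ZFSet) : Prop :=
  ∃ A ∈ 𝕄.M, PossibleValues 𝕄 F.P F.le σ ∩ 𝕄.M ⊆ A.toSet

/-- `ℙ` has bounded names: every `ℙ`-name in `M` is bounded. -/
def HasBoundedNames (𝕄 : GBModel) (F : ClassForcing 𝕄) : Prop :=
  ∀ σ : ZFSet, σ ∈ 𝕄.M → IsName F.P σ → IsBoundedName 𝕄 F σ

/-- `X` is a proper class of `𝕄`: a class of `𝕄` that is not (the extension of) a set of `𝕄`. -/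
def IsProperClass (𝕄 : GBModel) (X : Set ZFSet) : Prop :=
  X ∈ 𝕄.Cls ∧ ¬ ∃ x ∈ 𝕄.M, x.toSet = X

/-- The proper class `X` of `𝕄` is turned into a set by forcing with `ℙ`: some `ℙ`-name in `M`
evaluates to `X` under some generic filter. -/
def TurnsIntoSet (𝕄 : GBModel) (F : ClassForcing 𝕄) (X : Set ZFSet) : Prop :=
  ∃ σ : ZFSet, σ ∈ 𝕄.M ∧ IsName F.P σ ∧
    ∃ G : Set ZFSet, IsGeneric 𝕄 F.P F.le G ∧ (nameEval G σ).toSet = X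

/-! ### Functions and partial functions as sets, collapse forcings -/

/-- `p` is a partial function from (a subset of) `γ` into the class `Y`. -/
def IsPFunOn (p γ : ZFSet) (Y : Set ZFSet) : Prop :=
  (∀ x : ZFSet, x ∈ p → ∃ a b : ZFSet, x = a.pair b ∧ a ∈ γ ∧ b ∈ Y) ∧
  ∀ a b b' : ZFSet, a.pair b ∈ p → a.pair b' ∈ p → b = b'

/-- The domain of a set of pairs. -/
def pdom (p : ZFSet) : Set ZFSet := {a | ∃ b : ZFSet, a.pair b ∈ p}

/-- `f` is (the graph of) an injective function from `X` into `Y`. -/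
def ZInjFun (f : ZFSet) (X Y : Set ZFSet) : Prop :=
  (∀ x : ZFSet, x ∈ f → ∃ a b : ZFSet, x = a.pair b ∧ a ∈ X ∧ b ∈ Y) ∧
  (∀ a b b' : ZFSet, a.pair b ∈ f → a.pair b' ∈ f → b = b') ∧
  (∀ a ∈ X, ∃ b : ZFSet, a.pair b ∈ f) ∧
  (∀ a a' b : ZFSet, a.pair b ∈ f → a'.pair b ∈ f → a = a')

/-- `D` has size less than the cardinality of `γ` in the sense of `M`:
no function of `M` injects `γ` into `D`. -/
def SmallerThan (𝕄 : GBModel) (γ : ZFSet) (D : Set ZFSet) : Prop :=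
  ¬ ∃ f ∈ 𝕄.M, ZInjFun f γ.toSet D

/-- Conditions of `Col(γ, Y)^M`: partial functions of `M` from `γ` to `Y` whose domain has
size less than the cardinality of `γ` in `M`. -/
def ColCond (𝕄 : GBModel) (γ : ZFSet) (Y : Set ZFSet) (p : ZFSet) : Prop :=
  p ∈ 𝕄.M ∧ IsPFunOn p γ Y ∧ SmallerThan 𝕄 γ (pdom p)

/-- Conditions of `Col₋*(γ, Y)^M`: those conditions of `Col(γ, Y)^M` whose domain is
an ordinal. -/
def ColStarCond (𝕄 : GBModel) (γ : ZFSet) (Y : Set ZFSet) (p : ZFSet) : Prop :=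
  ColCond 𝕄 γ Y p ∧ ∃ β : ZFSet, β.IsOrdinal ∧ pdom p = β.toSet

/-- `f` is (the graph of) a function with domain `I`. -/
def ZFuncOn (f I : ZFSet) : Prop :=
  (∀ x : ZFSet, x ∈ f → ∃ a b : ZFSet, x = a.pair b ∧ a ∈ I) ∧
  (∀ a b b' : ZFSet, a.pair b ∈ f → a.pair b' ∈ f → b = b') ∧
  (∀ a : ZFSet, a ∈ I → ∃ b : ZFSet, a.pair b ∈ f)

/-- Application of a set-function to an argument (junk value `∅` if undefined). -/
def zapp (f i : ZFSet) : ZFSet :=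
  if h : ∃ b : ZFSet, i.pair b ∈ f then h.choose else ∅

/-! ### Pretameness -/

/-- `ℙ` is pretame for `𝕄`: for every `p ∈ ℙ`, `I ∈ M` and every `𝒞`-coded sequence
`⟨D_i | i ∈ I⟩` (coded as the class of pairs `⟨i, x⟩` with `x ∈ D_i`) of dense subclasses
of `ℙ`, there are `q ≤ p` and `⟨d_i | i ∈ I⟩ ∈ M` with `d_i ⊆ D_i` predense below `q`. -/
def Pretame (𝕄 : GBModel) (F : ClassForcing 𝕄) : Prop :=
  ∀ p ∈ F.P, ∀ I : ZFSet, I ∈ 𝕄.M → ∀ D ∈ 𝕄.Cls,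
    (∀ i : ZFSet, i ∈ I →
      (∀ x : ZFSet, i.pair x ∈ D → x ∈ F.P) ∧ ∀ r ∈ F.P, ∃ s : ZFSet, i.pair s ∈ D ∧ F.le s r) →
    ∃ q ∈ F.P, F.le q p ∧ ∃ d ∈ 𝕄.M, ZFuncOn d I ∧
      ∀ i : ZFSet, i ∈ I → (∀ x : ZFSet, x ∈ zapp d i → i.pair x ∈ D) ∧
        ∀ r ∈ F.P, F.le r q → ∃ a : ZFSet, a ∈ zapp d i ∧ Compat F.P F.le r a

/-! ### The specific forcings of Sections 6 and 7 -/

/-- Conditions of Definition 6.8: (not necessarily finite) partial functions from `ω` to `2`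
lying in `M`. -/
def PCond (𝕄 : GBModel) (p : ZFSet) : Prop :=
  p ∈ 𝕄.M ∧ IsPFunOn p ZFSet.omega {x : ZFSet | x = ∅ ∨ x = ({∅} : ZFSet)}

/-- Conditions of the finite support product `ℚ` of `ω` many copies of `ℙ`:
finite sequences `⟨p₀, …, p_k⟩` of `ℙ`-conditions. -/
def QCond (𝕄 : GBModel) (s : ZFSet) : Prop :=
  s ∈ 𝕄.M ∧ ∃ n : ZFSet, n ∈ ZFSet.omega ∧ ZFuncOn s n ∧
    ∀ i : ZFSet, i ∈ n → PCond 𝕄 (zapp s i)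

/-- The coordinatewise ordering on `ℚ`. -/
def QLe (s' s : ZFSet) : Prop :=
  pdom s ⊆ pdom s' ∧ ∀ i ∈ pdom s, zapp s i ⊆ zapp s' i

/-- The power class `𝒫(ω)^M`. -/
def PowOmega (𝕄 : GBModel) : Set ZFSet :=
  {x : ZFSet | x ∈ 𝕄.M ∧ x ⊆ ZFSet.omega}

/-- `X ⊆ M` is definable over `⟨M, ∈⟩` (from set parameters). -/
def DefinableOver (Mset : Set ZFSet) (X : Set ZFSet) : Prop :=
  ∃ (φ : EFormula) (v : ℕ → ZFSet), (∀ n, v n ∈ Mset) ∧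
    X = {x : ZFSet | x ∈ Mset ∧ EFormula.Sat Mset (Function.update v 0 x) φ}

/-- Every set of `M` is countable in `M`: it injects into `ω` by a function of `M`. -/
def AllSetsCountable (𝕄 : GBModel) : Prop :=
  ∀ x ∈ 𝕄.M, ∃ f ∈ 𝕄.M, ZInjFun f x.toSet ZFSet.omega.toSet


universe u

/-! ### The first-order structure `M` and definability -/

/-- The underlying structure of the model, as a type. -/
structure Vt (𝕄 : GBModel.{u}) : Type (u+1) where
  /-- the underlying set -/
  val : ZFSet.{u}
  prop : val ∈ 𝕄.M

instance (𝕄 : GBModel.{u}) : Membership (Vt 𝕄) (Vt 𝕄) := ⟨fun y x => x.1 ∈ y.1⟩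

section Framework
variable {𝕄 : GBModel.{u}}

theorem Vt.mem_def {x y : Vt 𝕄} : x ∈ y ↔ x.1 ∈ y.1 := Iff.rfl

theorem Vt.val_inj {x y : Vt 𝕄} (h : x.1 = y.1) : x = y := by
  cases x
  cases y
  cases h
  rfl

theorem Vt.val_iff {x y : Vt 𝕄} : x = y ↔ x.1 = y.1 := ⟨fun h => by rw [h], Vt.val_inj⟩

theorem Vt.ext {x y : Vt 𝕄} (h : ∀ z : Vt 𝕄, z ∈ x ↔ z ∈ y) : x = y := by
  apply Vt.val_inj
  apply ZFSet.ext
  intro z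
  constructor
  · intro hz
    exact (h ⟨z, 𝕄.transitive _ x.2 _ hz⟩).1 hz
  · intro hz
    exact (h ⟨z, 𝕄.transitive _ y.2 _ hz⟩).2 hz

theorem Vt.ext_iff {x y : Vt 𝕄} : x = y ↔ ∀ z : Vt 𝕄, z ∈ x ↔ z ∈ y :=
  ⟨fun h => by simp [h], Vt.ext⟩

theorem Vt.induct {P : Vt 𝕄 → Prop} (h : ∀ x, (∀ y, y ∈ x → P y) → P x) (x : Vt 𝕄) : P x := by
  have : ∀ z : ZFSet, ∀ hz : z ∈ 𝕄.M, P ⟨z, hz⟩ := by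
    intro z
    induction z using ZFSet.inductionOn with
    | h z ih =>
      intro hz
      apply h
      intro y hy
      exact ih y.1 hy y.2
  exact this x.1 x.2

/-- Stream cons. -/
def scons {α : Type*} (x : α) (v : ℕ → α) : ℕ → α
  | 0 => x
  | n+1 => v n

@[simp] theorem scons_zero {α : Type*} (x : α) (v : ℕ → α) : scons x v 0 = x := rfl
@[simp] theorem scons_succ {α : Type*} (x : α) (v : ℕ → α) (n : ℕ) : scons x v (n+1) = v n := rfl

/-- Predicates on streams of elements of `M` which are first-order definable with classes as
parameters. -/
inductive Dfn (𝕄 : GBModel.{u}) : ((ℕ → Vt 𝕄) → Prop) → Prop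
  | mem (i j : ℕ) : Dfn 𝕄 (fun v => v i ∈ v j)
  | eq (i j : ℕ) : Dfn 𝕄 (fun v => v i = v j)
  | cls (C : Set ZFSet.{u}) (hC : C ∈ 𝕄.Cls) (i : ℕ) : Dfn 𝕄 (fun v => (v i).1 ∈ C)
  | not {P} : Dfn 𝕄 P → Dfn 𝕄 (fun v => ¬ P v)
  | or {P Q} : Dfn 𝕄 P → Dfn 𝕄 Q → Dfn 𝕄 (fun v => P v ∨ Q v)
  | ex {P : (ℕ → Vt 𝕄) → Vt 𝕄 → Prop} : Dfn 𝕄 (fun v => P (fun n => v (n+1)) (v 0)) →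
      Dfn 𝕄 (fun v => ∃ x, P v x)

theorem Dfn.rename {P : (ℕ → Vt 𝕄) → Prop} (h : Dfn 𝕄 P) :
    ∀ g : ℕ → ℕ, Dfn 𝕄 (fun v => P (fun n => v (g n))) := by
  induction h with
  | mem i j => intro g; exact Dfn.mem _ _
  | eq i j => intro g; exact Dfn.eq _ _
  | cls C hC i => intro g; exact Dfn.cls C hC _
  | not _ ih => intro g; exact (ih g).not
  | or _ _ ih1 ih2 => intro g; exact (ih1 g).or (ih2 g)
  | ex _ ih =>
    intro g
    apply Dfn.ex
    exact ih (fun n => Nat.casesOn n 0 (fun m => g m + 1))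

theorem Dfn.support {P : (ℕ → Vt 𝕄) → Prop} (h : Dfn 𝕄 P) :
    ∃ N : ℕ, ∀ v w : ℕ → Vt 𝕄, (∀ n < N, v n = w n) → (P v ↔ P w) := by
  induction h with
  | mem i j =>
    refine ⟨max i j + 1, fun v w h => ?_⟩
    beta_reduce
    rw [h i (by omega), h j (by omega)]
  | eq i j =>
    refine ⟨max i j + 1, fun v w h => ?_⟩
    beta_reduce
    rw [h i (by omega), h j (by omega)]
  | cls C hC i =>
    refine ⟨i + 1, fun v w h => ?_⟩
    beta_reduce
    rw [h i (by omega)]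
  | not _ ih =>
    obtain ⟨N, h⟩ := ih
    exact ⟨N, fun v w hv => not_congr (h v w hv)⟩
  | or _ _ ih1 ih2 =>
    obtain ⟨N, h⟩ := ih1
    obtain ⟨N', h'⟩ := ih2
    exact ⟨max N N', fun v w hv => or_congr (h v w fun n hn => hv n (by omega))
      (h' v w fun n hn => hv n (by omega))⟩
  | ex _ ih =>
    obtain ⟨N, h⟩ := ih
    refine ⟨N, fun v w hv => exists_congr fun x => ?_⟩
    refine h (scons x v) (scons x w) ?_
    intro n hn
    cases n with
    | zero => rfl
    | succ m => exact hv m (by omega)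

/-- Renaming the class parameters. -/
def GBFormula.mapC (f : ℕ → ℕ) : GBFormula → GBFormula
  | .mem i j => .mem i j
  | .eq i j => .eq i j
  | .cls i j => .cls i (f j)
  | .not φ => .not (φ.mapC f)
  | .or φ ψ => .or (φ.mapC f) (ψ.mapC f)
  | .ex i φ => .ex i (φ.mapC f)

theorem GBFormula.sat_mapC (Ms : Set ZFSet.{u}) (f : ℕ → ℕ) (Cs : ℕ → Set ZFSet.{u})
    (φ : GBFormula) : ∀ v, (φ.mapC f).Sat Ms Cs v ↔ φ.Sat Ms (fun n => Cs (f n)) v := by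
  induction φ with
  | mem i j => intro v; rfl
  | eq i j => intro v; rfl
  | cls i j => intro v; rfl
  | not φ ih => intro v; exact not_congr (ih v)
  | or φ ψ ih1 ih2 => intro v; exact or_congr (ih1 v) (ih2 v)
  | ex i φ ih => intro v; exact exists_congr fun x => and_congr_right fun _ => ih _

theorem Dfn.formula {P : (ℕ → Vt 𝕄) → Prop} (h : Dfn 𝕄 P) :
    ∀ g : ℕ → ℕ, ∃ (φ : GBFormula) (Cs : ℕ → Set ZFSet.{u}), (∀ n, Cs n ∈ 𝕄.Cls) ∧
      ∀ v : ℕ → Vt 𝕄, φ.Sat 𝕄.M Cs (fun n => (v n).1) ↔ P (fun n => v (g n)) := by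
  have hE : (∅ : ZFSet).toSet ∈ 𝕄.Cls := 𝕄.sets_are_classes _ 𝕄.empty_mem
  induction h with
  | mem i j => intro g; exact ⟨.mem (g i) (g j), fun _ => _, fun _ => hE, fun v => Iff.rfl⟩
  | eq i j =>
    intro g
    refine ⟨.eq (g i) (g j), fun _ => _, fun _ => hE, fun v => ?_⟩
    exact Vt.val_iff.symm
  | cls C hC i => intro g; exact ⟨.cls (g i) 0, fun _ => C, fun _ => hC, fun v => Iff.rfl⟩
  | not _ ih =>
    intro g
    obtain ⟨φ, Cs, h1, h2⟩ := ih g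
    exact ⟨.not φ, Cs, h1, fun v => not_congr (h2 v)⟩
  | or _ _ ih1 ih2 =>
    intro g
    obtain ⟨φ, Cs, h1, h2⟩ := ih1 g
    obtain ⟨φ', Cs', h1', h2'⟩ := ih2 g
    refine ⟨.or (φ.mapC (fun n => 2*n)) (φ'.mapC (fun n => 2*n+1)),
      fun n => if n % 2 = 0 then Cs (n/2) else Cs' (n/2), ?_, ?_⟩
    · intro n
      dsimp only
      split
      · exact h1 _
      · exact h1' _
    · intro v
      refine or_congr ?_ ?_
      · rw [GBFormula.sat_mapC, ← h2 v]
        have : (fun n => if (2*n) % 2 = 0 then Cs ((2*n)/2) else Cs' ((2*n)/2)) = Cs := by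
          funext n
          simp
        rw [this]
      · rw [GBFormula.sat_mapC, ← h2' v]
        have : (fun n => if (2*n+1) % 2 = 0 then Cs ((2*n+1)/2) else Cs' ((2*n+1)/2)) = Cs' := by
          funext n
          rw [if_neg (by omega)]
          congr 1
          omega
        rw [this]
  | @ex P hP ih =>
    intro g
    obtain ⟨N, hN⟩ := hP.support
    obtain ⟨i, hi⟩ : ∃ i, ∀ n < N, g n ≠ i := by
      obtain ⟨i, hi⟩ := Infinite.exists_notMem_finset ((Finset.range N).image g)
      refine ⟨i, fun n hn h => hi ?_⟩
      exact Finset.mem_image.2 ⟨n, Finset.mem_range.2 hn, h⟩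
    obtain ⟨φ, Cs, h1, h2⟩ := ih (fun n => Nat.casesOn n i g)
    refine ⟨.ex i φ, Cs, h1, fun v => ?_⟩
    have key : ∀ x : Vt 𝕄, φ.Sat 𝕄.M Cs (Function.update (fun n => (v n).1) i x.1) ↔
        P (fun n => v (g n)) x := by
      intro x
      have e : Function.update (fun n => (v n).1) i x.1 =
          fun n => (Function.update v i x n).1 := by
        funext n
        by_cases hn : n = i
        · subst hn; simp
        · simp [hn]
      rw [e, h2]
      refine hN (fun n => Function.update v i x (Nat.casesOn n i g)) (scons x (fun n => v (g n))) ?_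
      intro n hn
      cases n with
      | zero => simp
      | succ m =>
        have := hi m (by omega)
        simp [this]
    constructor
    · rintro ⟨x, hx, h⟩
      exact ⟨⟨x, hx⟩, (key ⟨x, hx⟩).1 h⟩
    · rintro ⟨x, h⟩
      exact ⟨x.1, x.2, (key x).2 h⟩

theorem Dfn.mem_cls {P : (ℕ → Vt 𝕄) → Prop} (h : Dfn 𝕄 P) (v : ℕ → Vt 𝕄) :
    {x : ZFSet.{u} | ∃ hx : x ∈ 𝕄.M, P (scons ⟨x, hx⟩ v)} ∈ 𝕄.Cls := by
  obtain ⟨φ, Cs, h1, h2⟩ := h.formula id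
  have := 𝕄.comprehension φ (fun n => (v (n-1)).1) Cs (fun n => (v _).2) h1
  convert this using 1
  ext x
  constructor
  · rintro ⟨hx, h⟩
    refine ⟨hx, ?_⟩
    have := (h2 (scons ⟨x, hx⟩ v)).2 h
    convert this using 1
    funext n
    cases n <;> simp [scons]
  · rintro ⟨hx, h⟩
    refine ⟨hx, ?_⟩
    have := (h2 (scons ⟨x, hx⟩ v)).1
    refine this ?_
    convert h using 1
    funext n
    cases n <;> simp [scons]

/-! Closure properties -/

theorem Dfn.congr {P Q : (ℕ → Vt 𝕄) → Prop} (h : ∀ v, P v ↔ Q v) (hP : Dfn 𝕄 P) : Dfn 𝕄 Q := by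
  have : P = Q := funext fun v => propext (h v)
  exact this ▸ hP

theorem Dfn.and {P Q : (ℕ → Vt 𝕄) → Prop} (hP : Dfn 𝕄 P) (hQ : Dfn 𝕄 Q) :
    Dfn 𝕄 (fun v => P v ∧ Q v) :=
  ((hP.not.or hQ.not).not).congr fun v => by tauto

theorem Dfn.imp {P Q : (ℕ → Vt 𝕄) → Prop} (hP : Dfn 𝕄 P) (hQ : Dfn 𝕄 Q) :
    Dfn 𝕄 (fun v => P v → Q v) :=
  (hP.not.or hQ).congr fun v => by tauto

theorem Dfn.iff {P Q : (ℕ → Vt 𝕄) → Prop} (hP : Dfn 𝕄 P) (hQ : Dfn 𝕄 Q) :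
    Dfn 𝕄 (fun v => P v ↔ Q v) :=
  ((hP.imp hQ).and (hQ.imp hP)).congr fun v => by tauto

theorem Dfn.all {P : (ℕ → Vt 𝕄) → Vt 𝕄 → Prop}
    (h : Dfn 𝕄 (fun v => P (fun n => v (n+1)) (v 0))) : Dfn 𝕄 (fun v => ∀ x, P v x) :=
  (Dfn.ex (P := fun v x => ¬ P v x) h.not).not.congr fun v => by push Not; rfl

/-- Definable terms. -/
def DT (t : (ℕ → Vt 𝕄) → Vt 𝕄) : Prop := Dfn 𝕄 (fun v => v 0 = t (fun n => v (n+1)))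

theorem DT.var (i : ℕ) : DT (𝕄 := 𝕄) (fun v => v i) := Dfn.eq 0 (i+1)

theorem DT.const (a : Vt 𝕄) : DT (𝕄 := 𝕄) (fun _ => a) := by
  have h := 𝕄.sets_are_classes _ (𝕄.pair_mem _ a.2 _ a.2)
  refine (Dfn.cls _ h 0).congr fun v => ?_
  change (v 0).1 ∈ ({a.1, a.1} : ZFSet) ↔ _
  rw [ZFSet.mem_pair, or_self, Vt.val_iff]

theorem DT.rename {t : (ℕ → Vt 𝕄) → Vt 𝕄} (h : DT t) (g : ℕ → ℕ) :
    DT (fun v => t (fun n => v (g n))) := by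
  have := Dfn.rename (P := fun v => v 0 = t (fun n => v (n+1))) h (scons 0 (fun m => g m + 1))
  exact this

theorem DT.congr {s t : (ℕ → Vt 𝕄) → Vt 𝕄} (h : ∀ v, s v = t v) (hs : DT s) : DT t := by
  have : s = t := funext h
  exact this ▸ hs

theorem Dfn.subst1 {R : Vt 𝕄 → Prop} (hR : Dfn 𝕄 (fun v => R (v 0)))
    {s : (ℕ → Vt 𝕄) → Vt 𝕄} (hs : DT s) : Dfn 𝕄 (fun v => R (s v)) := by
  refine (Dfn.ex (P := fun v x => x = s v ∧ R x) (hs.and hR)).congr fun v => ?_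
  simp

theorem Dfn.subst2 {R : Vt 𝕄 → Vt 𝕄 → Prop} (hR : Dfn 𝕄 (fun v => R (v 0) (v 1)))
    {s t : (ℕ → Vt 𝕄) → Vt 𝕄} (hs : DT s) (ht : DT t) : Dfn 𝕄 (fun v => R (s v) (t v)) := by
  refine (Dfn.ex (P := fun v x => x = s v ∧ ∃ y, y = t v ∧ R x y) (hs.and ?_)).congr fun v => ?_
  · refine Dfn.ex (P := fun v y => y = t (fun n => v (n+1)) ∧ R (v 0) y) ?_
    refine (ht.rename (fun n => n+1)).rename (fun n => n) |>.and ?_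
    exact hR.rename (fun n => Nat.casesOn n 1 (fun _ => 0))
  · simp

theorem Dfn.subst3 {R : Vt 𝕄 → Vt 𝕄 → Vt 𝕄 → Prop} (hR : Dfn 𝕄 (fun v => R (v 0) (v 1) (v 2)))
    {s t r : (ℕ → Vt 𝕄) → Vt 𝕄} (hs : DT s) (ht : DT t) (hr : DT r) :
    Dfn 𝕄 (fun v => R (s v) (t v) (r v)) := by
  refine (Dfn.ex (P := fun v x => x = s v ∧ ∃ y, y = t v ∧ ∃ z, z = r v ∧ R x y z)
    (hs.and ?_)).congr fun v => ?_
  · refine Dfn.ex (P := fun v y => y = t (fun n => v (n+1)) ∧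
      ∃ z, z = r (fun n => v (n+1)) ∧ R (v 0) y z) ?_
    refine (ht.rename (fun n => n+1)).rename (fun n => n) |>.and ?_
    refine Dfn.ex (P := fun v z => z = r (fun n => v (n+1+1)) ∧ R (v 1) (v 0) z) ?_
    refine (hr.rename (fun n => n+1+1)).and ?_
    exact hR.rename (fun n => Nat.casesOn n 2 (fun m => Nat.casesOn m 1 (fun _ => 0)))
  · simp

theorem Dfn.mem' {s t : (ℕ → Vt 𝕄) → Vt 𝕄} (hs : DT s) (ht : DT t) :
    Dfn 𝕄 (fun v => s v ∈ t v) := 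
  Dfn.subst2 (R := fun x y => x ∈ y) (Dfn.mem 0 1) hs ht

theorem Dfn.eq' {s t : (ℕ → Vt 𝕄) → Vt 𝕄} (hs : DT s) (ht : DT t) :
    Dfn 𝕄 (fun v => s v = t v) := Dfn.subst2 (R := fun x y => x = y) (Dfn.eq 0 1) hs ht

theorem Dfn.cls' {C : Set ZFSet.{u}} (hC : C ∈ 𝕄.Cls) {s : (ℕ → Vt 𝕄) → Vt 𝕄} (hs : DT s) :
    Dfn 𝕄 (fun v => (s v).1 ∈ C) := Dfn.subst1 (R := fun x => x.1 ∈ C) (Dfn.cls C hC 0) hs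

theorem DT.subst1 {f : Vt 𝕄 → Vt 𝕄} (hf : DT (fun v => f (v 0)))
    {s : (ℕ → Vt 𝕄) → Vt 𝕄} (hs : DT s) : DT (fun v => f (s v)) := by
  refine Dfn.subst2 (R := fun x y => x = f y) hf (DT.var 0) (hs.rename (fun n => n+1))

theorem DT.subst2 {f : Vt 𝕄 → Vt 𝕄 → Vt 𝕄} (hf : DT (fun v => f (v 0) (v 1)))
    {s t : (ℕ → Vt 𝕄) → Vt 𝕄} (hs : DT s) (ht : DT t) : DT (fun v => f (s v) (t v)) := by
  refine Dfn.subst3 (R := fun x y z => x = f y z) hf (DT.var 0) (hs.rename (fun n => n+1))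
    (ht.rename (fun n => n+1))

/-! ### Set operations -/

/-- Unordered pair. -/
def Vt.upair (a b : Vt 𝕄) : Vt 𝕄 := ⟨{a.1, b.1}, 𝕄.pair_mem _ a.2 _ b.2⟩

theorem Vt.mem_upair {a b x : Vt 𝕄} : x ∈ Vt.upair a b ↔ x = a ∨ x = b := by
  simp [Vt.mem_def, Vt.upair, Vt.val_iff]

theorem DT.upair {s t : (ℕ → Vt 𝕄) → Vt 𝕄} (hs : DT s) (ht : DT t) :
    DT (fun v => Vt.upair (s v) (t v)) := by
  refine DT.subst2 (f := Vt.upair) ?_ hs ht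
  have : Dfn 𝕄 (fun v => ∀ x, x ∈ v 0 ↔ x = v 1 ∨ x = v 2) :=
    Dfn.all ((Dfn.mem 0 1).iff ((Dfn.eq 0 2).or (Dfn.eq 0 3)))
  refine this.congr fun v => ?_
  rw [Vt.ext_iff]
  simp only [Vt.mem_upair]

/-- Ordered pair. -/
def Vt.pair (a b : Vt 𝕄) : Vt 𝕄 := Vt.upair (Vt.upair a a) (Vt.upair a b)

theorem Vt.pair_val (a b : Vt 𝕄) : (Vt.pair a b).1 = ZFSet.pair a.1 b.1 := by
  simp [Vt.pair, Vt.upair, ZFSet.pair]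

theorem Vt.pair_inj {a b c d : Vt 𝕄} : Vt.pair a b = Vt.pair c d ↔ a = c ∧ b = d := by
  rw [Vt.val_iff, Vt.pair_val, Vt.pair_val, ZFSet.pair_inj, Vt.val_iff, Vt.val_iff]

theorem DT.pair {s t : (ℕ → Vt 𝕄) → Vt 𝕄} (hs : DT s) (ht : DT t) :
    DT (fun v => Vt.pair (s v) (t v)) := DT.upair (hs.upair hs) (hs.upair ht)

/-- Union. -/
def Vt.sUnion (a : Vt 𝕄) : Vt 𝕄 := ⟨ZFSet.sUnion a.1, 𝕄.sUnion_mem _ a.2⟩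

theorem Vt.mem_sUnion {a x : Vt 𝕄} : x ∈ Vt.sUnion a ↔ ∃ y, y ∈ a ∧ x ∈ y := by
  constructor
  · intro h
    obtain ⟨y, hy, hx⟩ := ZFSet.mem_sUnion.1 (show x.1 ∈ ZFSet.sUnion a.1 from h)
    exact ⟨⟨y, 𝕄.transitive _ a.2 _ hy⟩, hy, hx⟩
  · rintro ⟨y, hy, hx⟩
    exact ZFSet.mem_sUnion.2 ⟨y.1, hy, hx⟩

theorem DT.sUnion {s : (ℕ → Vt 𝕄) → Vt 𝕄} (hs : DT s) : DT (fun v => Vt.sUnion (s v)) := by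
  refine DT.subst1 (f := Vt.sUnion) ?_ hs
  have : Dfn 𝕄 (fun v => ∀ x, x ∈ v 0 ↔ ∃ y, y ∈ v 1 ∧ x ∈ y) :=
    Dfn.all ((Dfn.mem 0 1).iff (Dfn.ex ((Dfn.mem 0 3).and (Dfn.mem 1 0))))
  refine this.congr fun v => ?_
  rw [Vt.ext_iff]
  simp only [Vt.mem_sUnion]

/-- Binary union. -/
def Vt.union (a b : Vt 𝕄) : Vt 𝕄 := Vt.sUnion (Vt.upair a b)

theorem Vt.mem_union {a b x : Vt 𝕄} : x ∈ Vt.union a b ↔ x ∈ a ∨ x ∈ b := by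
  simp [Vt.union, Vt.mem_sUnion, Vt.mem_upair]

theorem DT.union {s t : (ℕ → Vt 𝕄) → Vt 𝕄} (hs : DT s) (ht : DT t) :
    DT (fun v => Vt.union (s v) (t v)) := (hs.upair ht).sUnion

/-- The empty set. -/
def Vt.empty : Vt 𝕄 := ⟨∅, 𝕄.empty_mem⟩

theorem Vt.not_mem_empty (x : Vt 𝕄) : ¬ x ∈ (Vt.empty : Vt 𝕄) := ZFSet.notMem_empty x.1

/-- The set of natural numbers. -/
def Vt.omega : Vt 𝕄 := ⟨ZFSet.omega, 𝕄.omega_mem⟩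

theorem DT.ite {P : (ℕ → Vt 𝕄) → Prop} (hP : Dfn 𝕄 P) {s t : (ℕ → Vt 𝕄) → Vt 𝕄}
    (hs : DT s) (ht : DT t) : DT (fun v => if P v then s v else t v) := by
  have hP' := hP.rename (fun n => n+1)
  refine ((hP'.and hs).or (hP'.not.and ht)).congr fun v => ?_
  by_cases h : P (fun n => v (n+1)) <;> simp [h]

/-! ### Separation and replacement -/

theorem Dfn.sep {P : (ℕ → Vt 𝕄) → Prop} (h : Dfn 𝕄 P) (v : ℕ → Vt 𝕄) (a : Vt 𝕄) :
    ∃ b : Vt 𝕄, ∀ x, x ∈ b ↔ x ∈ a ∧ P (scons x v) := by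
  obtain ⟨b, hb, h1⟩ := 𝕄.separation _ (h.mem_cls v) a.1 a.2
  refine ⟨⟨b, hb⟩, fun x => ?_⟩
  refine (h1 x.1).trans (and_congr_right fun _ => ?_)
  exact ⟨fun ⟨_, h⟩ => h, fun h => ⟨x.2, h⟩⟩

theorem Dfn.coll {P : (ℕ → Vt 𝕄) → Vt 𝕄 → Vt 𝕄 → Prop}
    (h : Dfn 𝕄 (fun v => P (fun n => v (n+2)) (v 0) (v 1))) (v : ℕ → Vt 𝕄)
    (a : Vt 𝕄) (hx : ∀ x, x ∈ a → ∃ y, P v x y) :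
    ∃ b : Vt 𝕄, ∀ x, x ∈ a → ∃ y, y ∈ b ∧ P v x y := by
  have h1 : Dfn 𝕄 (fun v => ∃ x, ∃ y, v 0 = Vt.pair x y ∧ P (fun n => v (n+1)) x y) := by
    apply Dfn.ex
    apply Dfn.ex
    refine ((Dfn.eq' (DT.var 2) ((DT.var 1).pair (DT.var 0)))).and ?_
    exact h.rename (fun n => Nat.casesOn n 1 (fun m => Nat.casesOn m 0 (fun k => k + 3)))
  obtain ⟨b, hb, h2⟩ := 𝕄.collection _ (h1.mem_cls v) a.1 a.2 (by
    intro x hxa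
    obtain ⟨y, hy⟩ := hx ⟨x, 𝕄.transitive _ a.2 _ hxa⟩ hxa
    refine ⟨y.1, y.2, ?_⟩
    have e := Vt.pair_val ⟨x, 𝕄.transitive _ a.2 _ hxa⟩ y
    refine ⟨?_, ⟨x, 𝕄.transitive _ a.2 _ hxa⟩, y, ?_, hy⟩
    · rw [← e]; exact (Vt.pair _ _).2
    · exact Vt.val_inj e.symm)
  refine ⟨⟨b, hb⟩, fun x hxa => ?_⟩
  obtain ⟨y, hy, hp, x', y', he, hP⟩ := h2 x.1 hxa
  have e : x = x' ∧ y = y'.1 := by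
    have := congrArg Vt.val he
    rw [Vt.pair_val] at this
    obtain ⟨e1, e2⟩ := ZFSet.pair_inj.1 this
    exact ⟨Vt.val_inj e1, e2⟩
  obtain ⟨rfl, rfl⟩ := e
  exact ⟨y', hy, hP⟩

theorem DT.repl {t : (ℕ → Vt 𝕄) → Vt 𝕄} (h : DT t) (v : ℕ → Vt 𝕄) (a : Vt 𝕄) :
    ∃ b : Vt 𝕄, ∀ y, y ∈ b ↔ ∃ x, x ∈ a ∧ y = t (scons x v) := by
  obtain ⟨b, hb⟩ := Dfn.coll (P := fun v x y => y = t (scons x v)) (by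
    refine Dfn.congr ?_ (Dfn.rename (P := fun v => v 0 = t (fun n => v (n+1))) h
      (fun n => Nat.casesOn n 1 (fun m => Nat.casesOn m 0 (fun k => k+2))))
    intro v
    have : (fun n => v (Nat.casesOn (n+1) 1 (fun m => Nat.casesOn m 0 (fun k => k+2)) : ℕ))
      = scons (v 0) (fun n => v (n+2)) := by
      funext n
      cases n <;> rfl
    exact Iff.of_eq (congrArg (fun w => v 1 = t w) this)) v a
    (fun x _ => ⟨_, rfl⟩)
  have h1 : Dfn 𝕄 (fun v => ∃ x, x ∈ v 1 ∧ v 0 = t (scons x (fun n => v (n+2)))) := by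
    apply Dfn.ex
    refine (Dfn.mem 0 2).and ?_
    refine Dfn.congr ?_ (Dfn.rename (P := fun v => v 0 = t (fun n => v (n+1))) h
      (fun n => Nat.casesOn n 1 (fun m => Nat.casesOn m 0 (fun k => k+3))))
    intro v
    have : (fun n => v (Nat.casesOn (n+1) 1 (fun m => Nat.casesOn m 0 (fun k => k+3)) : ℕ))
      = scons (v 0) (fun n => v (n+3)) := by
      funext n
      cases n <;> rfl
    exact Iff.of_eq (congrArg (fun w => v 1 = t w) this)
  obtain ⟨c, hc⟩ := h1.sep (scons a v) b
  refine ⟨c, fun y => ?_⟩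
  rw [hc]
  constructor
  · rintro ⟨_, x, hx, e⟩
    exact ⟨x, hx, e⟩
  · rintro ⟨x, hx, e⟩
    obtain ⟨y', hy', e'⟩ := hb x hx
    refine ⟨?_, x, hx, e⟩
    rw [e, ← e']
    exact hy'

/-- Image of `a v` under `x ↦ t (x :: v)`. -/
def Vt.img (t : (ℕ → Vt 𝕄) → Vt 𝕄) (a : Vt 𝕄) (v : ℕ → Vt 𝕄) : Vt 𝕄 :=
  if h : ∃ b : Vt 𝕄, ∀ y, y ∈ b ↔ ∃ x, x ∈ a ∧ y = t (scons x v) then h.choose else Vt.empty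

theorem DT.mem_img {t : (ℕ → Vt 𝕄) → Vt 𝕄} (h : DT t) {a : Vt 𝕄} {v : ℕ → Vt 𝕄} {y : Vt 𝕄} :
    y ∈ Vt.img t a v ↔ ∃ x, x ∈ a ∧ y = t (scons x v) := by
  have h1 := h.repl v a
  rw [Vt.img, dif_pos h1]
  exact h1.choose_spec y

theorem DT.img {t : (ℕ → Vt 𝕄) → Vt 𝕄} (h : DT t) {a : (ℕ → Vt 𝕄) → Vt 𝕄} (ha : DT a) :
    DT (fun v => Vt.img t (a v) v) := by
  have h1 : Dfn 𝕄 (fun v => ∀ y, y ∈ v 0 ↔ ∃ x, x ∈ a (fun n => v (n+1)) ∧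
      y = t (scons x (fun n => v (n+1)))) := by
    apply Dfn.all
    refine (Dfn.mem 0 1).iff ?_
    apply Dfn.ex
    refine (Dfn.mem' (DT.var 0) (ha.rename (fun n => n+3))).and ?_
    refine Dfn.congr ?_ (Dfn.rename (P := fun v => v 0 = t (fun n => v (n+1))) h
      (fun n => Nat.casesOn n 1 (fun m => Nat.casesOn m 0 (fun k => k+3))))
    intro v
    have : (fun n => v (Nat.casesOn (n+1) 1 (fun m => Nat.casesOn m 0 (fun k => k+3)) : ℕ))
      = scons (v 0) (fun n => v (n+3)) := by
      funext n
      cases n <;> rfl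
    exact Iff.of_eq (congrArg (fun w => v 1 = t w) this)
  refine h1.congr fun v => ?_
  rw [Vt.ext_iff]
  simp only [h.mem_img]

end Framework
section Names
variable {𝕄 : GBModel.{u}}

/-! ### Natural numbers -/

/-- The numeral `n` in `M`. -/
def nat : ℕ → Vt 𝕄
  | 0 => Vt.empty
  | n+1 => Vt.union (nat n) (Vt.upair (nat n) (nat n))

theorem mem_nat {n : ℕ} {x : Vt 𝕄} : x ∈ (nat n : Vt 𝕄) ↔ ∃ m < n, x = nat m := by
  induction n with
  | zero =>
    simp only [nat, Nat.not_lt_zero, false_and, exists_false, iff_false]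
    exact Vt.not_mem_empty x
  | succ n ih =>
    rw [nat, Vt.mem_union, ih, Vt.mem_upair, or_self]
    constructor
    · rintro (⟨m, h, e⟩ | e)
      · exact ⟨m, by omega, e⟩
      · exact ⟨n, by omega, e⟩
    · rintro ⟨m, h, e⟩
      rcases Nat.lt_succ_iff_lt_or_eq.1 h with h | h
      · exact Or.inl ⟨m, h, e⟩
      · exact Or.inr (h ▸ e)

theorem Vt.not_mem_self (x : Vt 𝕄) : ¬ x ∈ x := ZFSet.mem_irrefl x.1

theorem nat_inj {m n : ℕ} : (nat m : Vt 𝕄) = nat n ↔ m = n := by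
  constructor
  · intro h
    rcases Nat.lt_trichotomy m n with h1 | h1 | h1
    · have : (nat m : Vt 𝕄) ∈ (nat n : Vt 𝕄) := mem_nat.2 ⟨m, h1, rfl⟩
      rw [h] at this
      exact absurd this (Vt.not_mem_self _)
    · exact h1
    · have : (nat n : Vt 𝕄) ∈ (nat m : Vt 𝕄) := mem_nat.2 ⟨n, h1, rfl⟩
      rw [h] at this
      exact absurd this (Vt.not_mem_self _)
  · rintro rfl
    rfl

theorem mk_ofNat (n : ℕ) : ZFSet.mk (PSet.ofNat n) = (nat n : Vt 𝕄).1 := by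
  induction n with
  | zero => rfl
  | succ n ih =>
    change ZFSet.mk (insert (PSet.ofNat n) (PSet.ofNat n)) = _
    change insert (ZFSet.mk (PSet.ofNat n)) (ZFSet.mk (PSet.ofNat n)) = _
    rw [ih]
    ext z
    simp [nat, Vt.union, Vt.sUnion, Vt.upair, or_comm]

theorem mem_omega {x : Vt 𝕄} : x ∈ (Vt.omega : Vt 𝕄) ↔ ∃ n, x = nat n := by
  constructor
  · intro h
    obtain ⟨y, hy⟩ := Quotient.exists_rep x.1
    have h' : x.1 ∈ ZFSet.omega := h
    rw [← hy] at h'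
    change y ∈ PSet.omega at h'
    obtain ⟨⟨n⟩, hb⟩ := h'
    refine ⟨n, Vt.val_inj ?_⟩
    rw [← mk_ofNat, ← hy]
    exact Quotient.sound hb
  · rintro ⟨n, rfl⟩
    change (nat n : Vt 𝕄).1 ∈ ZFSet.omega
    rw [← mk_ofNat]
    change PSet.ofNat n ∈ PSet.omega
    exact ⟨⟨n⟩, PSet.Equiv.refl _⟩

theorem nat_mem_omega (n : ℕ) : (nat n : Vt 𝕄) ∈ (Vt.omega : Vt 𝕄) := mem_omega.2 ⟨n, rfl⟩

/-! ### Names -/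

theorem fst_rank_lt {τ p σ : ZFSet.{u}} (h : τ.pair p ∈ σ) : τ.rank < σ.rank := by
  have h1 : ({τ} : ZFSet) ∈ τ.pair p := by simp [ZFSet.pair]
  have h2 : τ ∈ ({τ} : ZFSet) := by simp
  exact (ZFSet.rank_lt_of_mem h2).trans ((ZFSet.rank_lt_of_mem h1).trans (ZFSet.rank_lt_of_mem h))

theorem isName_iff {S : Set ZFSet.{u}} {σ : ZFSet.{u}} :
    IsName S σ ↔ ∀ x ∈ σ, ∃ τ p, x = τ.pair p ∧ p ∈ S ∧ IsName S τ := by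
  rw [IsName, IsNameAux]
  refine forall_congr' fun x => ?_
  change (x ∈ σ → _) ↔ _
  refine forall_congr' fun hx => ?_
  refine exists_congr fun τ => exists_congr fun p => and_congr_right fun e => and_congr_right fun _ => ?_
  constructor
  · rintro ⟨_, h⟩
    exact h
  · intro h
    exact ⟨fst_rank_lt (e ▸ hx), h⟩

theorem mem_zimage {f : ZFSet.{u} → ZFSet.{u}} {x y : ZFSet.{u}} :
    y ∈ zimage f x ↔ ∃ z ∈ x, f z = y := by
  unfold zimage
  let _ : ZFSet.Definable₁ f := Classical.allZFSetDefinable _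
  exact ZFSet.mem_image

theorem mem_nameEval {G : Set ZFSet.{u}} {σ z : ZFSet.{u}} :
    z ∈ nameEval G σ ↔ ∃ τ p, τ.pair p ∈ σ ∧ p ∈ G ∧ z = nameEval G τ := by
  rw [nameEval, nameEvalAux, mem_zimage]
  constructor
  · rintro ⟨τ, hτ, e⟩
    obtain ⟨_, p, hp, h⟩ := ZFSet.mem_sep.1 hτ
    refine ⟨τ, p, h, hp, ?_⟩
    rw [dif_pos (fst_rank_lt h)] at e
    exact e.symm
  · rintro ⟨τ, p, h, hp, e⟩
    refine ⟨τ, ZFSet.mem_sep.2 ⟨?_, p, hp, h⟩, ?_⟩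
    · refine ZFSet.mem_sUnion.2 ⟨{τ}, ZFSet.mem_sUnion.2 ⟨_, h, ?_⟩, by simp⟩
      simp [ZFSet.pair]
    · rw [dif_pos (fst_rank_lt h)]
      exact e.symm

/-- Evaluation of names in `M`. -/
def ev (G : Set ZFSet.{u}) (σ : Vt 𝕄) : ZFSet.{u} := nameEval G σ.1

theorem pair_mem_parts {τ p : ZFSet.{u}} {σ : Vt 𝕄} (h : τ.pair p ∈ σ.1) :
    ∃ τ' p' : Vt 𝕄, τ = τ'.1 ∧ p = p'.1 ∧ Vt.pair τ' p' ∈ σ := by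
  have h1 := 𝕄.transitive _ σ.2 _ h
  have h2 : ({τ, p} : ZFSet) ∈ 𝕄.M := 𝕄.transitive _ h1 _ (by simp [ZFSet.pair])
  refine ⟨⟨τ, 𝕄.transitive _ h2 _ (by simp)⟩, ⟨p, 𝕄.transitive _ h2 _ (by simp)⟩, rfl, rfl, ?_⟩
  rw [Vt.mem_def, Vt.pair_val]
  exact h

theorem mem_ev {G : Set ZFSet.{u}} {σ : Vt 𝕄} {z : ZFSet.{u}} :
    z ∈ ev G σ ↔ ∃ τ p : Vt 𝕄, Vt.pair τ p ∈ σ ∧ p.1 ∈ G ∧ z = ev G τ := by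
  rw [ev, mem_nameEval]
  constructor
  · rintro ⟨τ, p, h, hp, e⟩
    obtain ⟨τ', p', rfl, rfl, h'⟩ := pair_mem_parts h
    exact ⟨τ', p', h', hp, e⟩
  · rintro ⟨τ, p, h, hp, e⟩
    rw [Vt.mem_def, Vt.pair_val] at h
    exact ⟨τ.1, p.1, h, hp, e⟩

/-- Names in `M`. -/
def Name (F : ClassForcing 𝕄) (σ : Vt 𝕄) : Prop := IsName F.P σ.1

theorem name_iff {F : ClassForcing 𝕄} {σ : Vt 𝕄} :
    Name F σ ↔ ∀ x, x ∈ σ → ∃ τ p : Vt 𝕄, x = Vt.pair τ p ∧ p.1 ∈ F.P ∧ Name F τ := by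
  rw [Name, isName_iff]
  constructor
  · intro h x hx
    obtain ⟨τ, p, e, hp, hτ⟩ := h x.1 hx
    obtain ⟨τ', p', rfl, rfl, h'⟩ := pair_mem_parts (σ := σ) (e ▸ hx : τ.pair p ∈ σ.1)
    exact ⟨τ', p', Vt.val_inj (by rw [e, Vt.pair_val]), hp, hτ⟩
  · intro h x hx
    obtain ⟨τ, p, e, hp, hτ⟩ := h ⟨x, 𝕄.transitive _ σ.2 _ hx⟩ hx
    refine ⟨τ.1, p.1, ?_, hp, hτ⟩
    rw [← Vt.pair_val, ← e]

/-- The top condition in `M`. -/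
def oneV (F : ClassForcing 𝕄) : Vt 𝕄 := ⟨F.one, 𝕄.classes_sub _ F.P_cls F.one_mem⟩

/-- Generic filters. -/
def Gen (F : ClassForcing 𝕄) (G : Set ZFSet.{u}) : Prop := IsGeneric 𝕄 F.P F.le G

theorem Gen.one_mem {F : ClassForcing 𝕄} {G : Set ZFSet.{u}} (h : Gen F G) : (oneV F).1 ∈ G := by
  obtain ⟨⟨h1, ⟨p, hp⟩, h2, _⟩, _⟩ := h
  exact h2 p hp _ F.one_mem (F.le_one p (h1 hp))

theorem exists_gen (F : ClassForcing 𝕄) {q : ZFSet.{u}} (hq : q ∈ F.P) :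
    ∃ G, Gen F G ∧ q ∈ G := by
  obtain ⟨D, hD⟩ := 𝕄.countable_Cls.exists_eq_range ⟨_, F.P_cls⟩
  have step : ∀ n : ℕ, ∀ p : {p // p ∈ F.P}, ∃ p' : {p // p ∈ F.P}, F.le p'.1 p.1 ∧
      (DenseIn F.P F.le (D n) → p'.1 ∈ D n) := by
    intro n p
    by_cases h : DenseIn F.P F.le (D n)
    · obtain ⟨p', h1, h2⟩ := h.2 p.1 p.2
      exact ⟨⟨p', h.1 h1⟩, h2, fun _ => h1⟩
    · exact ⟨p, F.le_refl _ p.2, fun h' => absurd h' h⟩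
  choose f hf using step
  let s : ℕ → {p // p ∈ F.P} := fun n => Nat.rec ⟨q, hq⟩ (fun n p => f n p) n
  have hs : ∀ n, s (n+1) = f n (s n) := fun n => rfl
  have mono : ∀ m n, m ≤ n → F.le (s n).1 (s m).1 := by
    intro m n h
    induction n, h using Nat.le_induction with
    | base => exact F.le_refl _ (s m).2
    | succ n _ ih => exact F.le_trans _ _ _ (by rw [hs]; exact (hf n (s n)).1) ih
  refine ⟨{p | p ∈ F.P ∧ ∃ n, F.le (s n).1 p}, ⟨⟨fun p h => h.1, ⟨q, hq, 0, F.le_refl _ hq⟩, ?_, ?_⟩, ?_⟩,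
    hq, 0, F.le_refl _ hq⟩
  · rintro p ⟨hp, n, h⟩ r hr hpr
    exact ⟨hr, n, F.le_trans _ _ _ h hpr⟩
  · rintro p ⟨hp, n, h⟩ r ⟨hr, m, h'⟩
    refine ⟨(s (max n m)).1, ⟨(s _).2, _, F.le_refl _ (s _).2⟩, ?_, ?_⟩
    · exact F.le_trans _ _ _ (mono _ _ (le_max_left _ _)) h
    · exact F.le_trans _ _ _ (mono _ _ (le_max_right _ _)) h'
  · intro C hC hd
    rw [hD] at hC
    obtain ⟨n, rfl⟩ := hC
    exact ⟨(s (n+1)).1, ⟨(s (n+1)).2, n+1, F.le_refl _ (s (n+1)).2⟩, (hf n (s n)).2 hd⟩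

end Names

section Conds
variable {𝕄 : GBModel.{u}}

/-! ### Conditions -/

/-- The finite sequence `⟨f 0, …, f (n-1)⟩`. -/
def enc (f : ℕ → Vt 𝕄) : ℕ → Vt 𝕄
  | 0 => Vt.empty
  | n+1 => Vt.union (enc f n) (Vt.upair (Vt.pair (nat n) (f n)) (Vt.pair (nat n) (f n)))

theorem mem_enc {f : ℕ → Vt 𝕄} {n : ℕ} {x : Vt 𝕄} :
    x ∈ enc f n ↔ ∃ m < n, x = Vt.pair (nat m) (f m) := by
  induction n with
  | zero =>
    simp only [enc, Nat.not_lt_zero, false_and, exists_false, iff_false]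
    exact Vt.not_mem_empty x
  | succ n ih =>
    rw [enc, Vt.mem_union, ih, Vt.mem_upair, or_self]
    constructor
    · rintro (⟨m, h, e⟩ | e)
      · exact ⟨m, by omega, e⟩
      · exact ⟨n, by omega, e⟩
    · rintro ⟨m, h, e⟩
      rcases Nat.lt_succ_iff_lt_or_eq.1 h with h | h
      · exact Or.inl ⟨m, h, e⟩
      · exact Or.inr (h ▸ e)

theorem pair_mem_enc {f : ℕ → Vt 𝕄} {n m : ℕ} {b : Vt 𝕄} :
    Vt.pair (nat m) b ∈ enc f n ↔ m < n ∧ b = f m := by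
  rw [mem_enc]
  constructor
  · rintro ⟨k, hk, e⟩
    obtain ⟨e1, e2⟩ := Vt.pair_inj.1 e
    cases nat_inj.1 e1
    exact ⟨hk, e2⟩
  · rintro ⟨h, rfl⟩
    exact ⟨m, h, rfl⟩

theorem zpair_mem_enc {f : ℕ → Vt 𝕄} {n : ℕ} {a b : ZFSet.{u}} :
    a.pair b ∈ (enc f n).1 ↔ ∃ m < n, a = (nat m : Vt 𝕄).1 ∧ b = (f m).1 := by
  constructor
  · intro h
    obtain ⟨a', b', rfl, rfl, h'⟩ := pair_mem_parts h
    obtain ⟨m, hm, e⟩ := mem_enc.1 h'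
    obtain ⟨rfl, rfl⟩ := Vt.pair_inj.1 e
    exact ⟨m, hm, rfl, rfl⟩
  · rintro ⟨m, hm, rfl, rfl⟩
    rw [← Vt.pair_val]
    exact mem_enc.2 ⟨m, hm, rfl⟩

theorem nat_val_inj {m n : ℕ} (h : (nat m : Vt 𝕄).1 = (nat n : Vt 𝕄).1) : m = n :=
  nat_inj.1 (Vt.val_inj h)

theorem zapp_enc {f : ℕ → Vt 𝕄} {n m : ℕ} (h : m < n) :
    zapp (enc f n).1 (nat m : Vt 𝕄).1 = (f m).1 := by
  have hex : ∃ b, (nat m : Vt 𝕄).1.pair b ∈ (enc f n).1 := ⟨(f m).1, zpair_mem_enc.2 ⟨m, h, rfl, rfl⟩⟩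
  rw [zapp, dif_pos hex]
  obtain ⟨k, hk, e1, e2⟩ := zpair_mem_enc.1 hex.choose_spec
  cases nat_val_inj e1
  exact e2

theorem pdom_enc {f : ℕ → Vt 𝕄} {n : ℕ} :
    pdom (enc f n).1 = {a | ∃ m < n, a = (nat m : Vt 𝕄).1} := by
  ext a
  simp only [pdom, zpair_mem_enc, Set.mem_ofPred_eq]
  constructor
  · rintro ⟨b, m, h, e, _⟩
    exact ⟨m, h, e⟩
  · rintro ⟨m, h, e⟩
    exact ⟨_, m, h, e, rfl⟩

theorem qle_enc {f g : ℕ → Vt 𝕄} {n m : ℕ} :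
    QLe (enc f n).1 (enc g m).1 ↔ m ≤ n ∧ ∀ i < m, ∀ x, x ∈ g i → x ∈ f i := by
  rw [QLe, pdom_enc, pdom_enc]
  constructor
  · rintro ⟨h1, h2⟩
    have hmn : m ≤ n := by
      by_contra hc
      obtain ⟨k, hk, e⟩ := h1 ⟨n, by omega, rfl⟩
      have := nat_val_inj e
      omega
    refine ⟨hmn, fun i hi x hx => ?_⟩
    have := h2 _ ⟨i, hi, rfl⟩
    rw [zapp_enc hi, zapp_enc (by omega)] at this
    exact this hx
  · rintro ⟨h1, h2⟩
    refine ⟨?_, ?_⟩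
    · rintro a ⟨k, hk, e⟩
      exact ⟨k, by omega, e⟩
    · rintro a ⟨i, hi, rfl⟩
      rw [zapp_enc hi, zapp_enc (by omega)]
      intro x hx
      exact h2 i hi ⟨x, 𝕄.transitive _ (g i).2 _ hx⟩ hx

/-- Partial functions from `ω` to `2`. -/
def PC (b : Vt 𝕄) : Prop :=
  (∀ x, x ∈ b → ∃ n, x = Vt.pair (nat n) (nat 0) ∨ x = Vt.pair (nat n) (nat 1)) ∧
  ∀ n, ¬ (Vt.pair (nat n) (nat 0) ∈ b ∧ Vt.pair (nat n) (nat 1) ∈ b)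

theorem nat_zero_val : (nat 0 : Vt 𝕄).1 = ∅ := rfl
theorem nat_one_val : (nat 1 : Vt 𝕄).1 = {∅} := by
  ext z
  simp [nat, Vt.union, Vt.sUnion, Vt.upair, Vt.empty]

theorem pcond_iff {b : Vt 𝕄} : PCond 𝕄 b.1 ↔ PC b := by
  constructor
  · rintro ⟨_, h1, h2⟩
    refine ⟨fun x hx => ?_, fun n h => ?_⟩
    · obtain ⟨a, i, e, ha, hi⟩ := h1 x.1 hx
      obtain ⟨a', i', rfl, rfl, h'⟩ := pair_mem_parts (σ := b) (e ▸ hx : a.pair i ∈ b.1)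
      obtain ⟨n, rfl⟩ := mem_omega.1 (show a' ∈ Vt.omega from ha)
      refine ⟨n, ?_⟩
      rw [← Vt.pair_val] at e
      rcases hi with hi | hi
      · left
        rw [Vt.val_inj e, Vt.val_inj (hi.trans nat_zero_val.symm)]
      · right
        rw [Vt.val_inj e, Vt.val_inj (hi.trans nat_one_val.symm)]
    · simp only [Vt.mem_def, Vt.pair_val] at h
      have := nat_val_inj (h2 _ _ _ h.1 h.2)
      omega
  · rintro ⟨h1, h2⟩
    have h0 : ∀ x, x ∈ b.1 → ∃ n, x = (Vt.pair (nat n : Vt 𝕄) (nat 0)).1 ∨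
        x = (Vt.pair (nat n : Vt 𝕄) (nat 1)).1 := by
      intro x hx
      obtain ⟨n, h⟩ := h1 ⟨x, 𝕄.transitive _ b.2 _ hx⟩ hx
      exact ⟨n, h.imp (congrArg Vt.val) (congrArg Vt.val)⟩
    refine ⟨b.2, ?_, ?_⟩
    · intro x hx
      obtain ⟨n, h⟩ := h0 x hx
      rw [Vt.pair_val, Vt.pair_val, nat_zero_val, nat_one_val] at h
      rcases h with h | h
      · exact ⟨_, _, h, nat_mem_omega n, Or.inl rfl⟩
      · exact ⟨_, _, h, nat_mem_omega n, Or.inr rfl⟩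
    · intro a i i' hi hi'
      obtain ⟨n, h⟩ := h0 _ hi
      obtain ⟨n', h'⟩ := h0 _ hi'
      simp only [Vt.pair_val, ZFSet.pair_inj] at h h'
      have hn : n = n' := by
        rcases h with h | h <;> rcases h' with h' | h' <;> exact nat_val_inj (h.1.symm.trans h'.1)
      subst hn
      have := h2 n
      simp only [Vt.mem_def, Vt.pair_val] at this
      rcases h with ⟨rfl, rfl⟩ | ⟨rfl, rfl⟩ <;> rcases h' with ⟨_, rfl⟩ | ⟨_, rfl⟩
      · rfl
      · exact absurd ⟨hi, hi'⟩ this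
      · exact absurd ⟨hi', hi⟩ this
      · rfl

theorem qcond_iff {s : Vt 𝕄} : QCond 𝕄 s.1 ↔ ∃ (f : ℕ → Vt 𝕄) (n : ℕ), (∀ i < n, PC (f i)) ∧ s = enc f n := by
  constructor
  · rintro ⟨_, n', hn', ⟨h1, h2, h3⟩, h4⟩
    obtain ⟨n, hn⟩ := mem_omega.1 (show (⟨n', 𝕄.transitive _ 𝕄.omega_mem _ hn'⟩ : Vt 𝕄) ∈ Vt.omega from hn')
    have hn : n' = (nat n : Vt 𝕄).1 := congrArg Vt.val hn
    subst hn
    have h5 : ∀ i : ℕ, ∃ b : Vt 𝕄, i < n → Vt.pair (nat i) b ∈ s := by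
      intro i
      by_cases hi : i < n
      · obtain ⟨b, hb⟩ := h3 (nat i : Vt 𝕄).1 (mem_nat.2 ⟨i, hi, rfl⟩ : nat i ∈ nat n)
        obtain ⟨a', b', e, rfl, h'⟩ := pair_mem_parts hb
        exact ⟨b', fun _ => Vt.val_inj e ▸ h'⟩
      · exact ⟨Vt.empty, fun h => absurd h hi⟩
    choose f hf using h5
    have hs : s = enc f n := by
      apply Vt.ext
      intro x
      rw [mem_enc]
      constructor
      · intro hx
        obtain ⟨a, b, e, ha⟩ := h1 x.1 hx
        obtain ⟨a', b', rfl, rfl, h'⟩ := pair_mem_parts (σ := s) (e ▸ hx : a.pair b ∈ s.1)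
        obtain ⟨m, hm, rfl⟩ := mem_nat.1 (show a' ∈ nat n from ha)
        refine ⟨m, hm, ?_⟩
        have hx2 : x.1 ∈ s.1 := hx
        rw [e] at hx2
        have := h2 _ _ _ hx2 (by simpa only [Vt.mem_def, Vt.pair_val] using hf m hm)
        rw [← Vt.val_inj this]
        rw [← Vt.pair_val] at e
        exact Vt.val_inj e
      · rintro ⟨m, hm, rfl⟩
        exact hf m hm
    refine ⟨f, n, fun i hi => ?_, hs⟩
    have := h4 _ (mem_nat.2 ⟨i, hi, rfl⟩ : (nat i : Vt 𝕄) ∈ nat n)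
    rw [hs, zapp_enc hi] at this
    exact pcond_iff.1 this
  · rintro ⟨f, n, h, rfl⟩
    refine ⟨(enc f n).2, (nat n : Vt 𝕄).1, nat_mem_omega n, ⟨?_, ?_, ?_⟩, ?_⟩
    · intro x hx
      obtain ⟨m, hm, e⟩ := mem_enc.1 (show (⟨x, 𝕄.transitive _ (enc f n).2 _ hx⟩ : Vt 𝕄) ∈ _ from hx)
      have e := congrArg Vt.val e
      rw [Vt.pair_val] at e
      exact ⟨_, _, e, (mem_nat.2 ⟨m, hm, rfl⟩ : (nat m : Vt 𝕄) ∈ nat n)⟩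
    · intro a b b' hb hb'
      obtain ⟨m, _, rfl, rfl⟩ := zpair_mem_enc.1 hb
      obtain ⟨m', _, e, rfl⟩ := zpair_mem_enc.1 hb'
      rw [nat_val_inj e]
    · intro a ha
      obtain ⟨m, hm, e⟩ := mem_nat.1 (show (⟨a, 𝕄.transitive _ (nat n : Vt 𝕄).2 _ ha⟩ : Vt 𝕄) ∈ nat n from ha)
      exact ⟨_, zpair_mem_enc.2 ⟨m, hm, congrArg Vt.val e, rfl⟩⟩
    · intro a ha
      obtain ⟨m, hm, e⟩ := mem_nat.1 (show (⟨a, 𝕄.transitive _ (nat n : Vt 𝕄).2 _ ha⟩ : Vt 𝕄) ∈ nat n from ha)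
      have e : a = _ := congrArg Vt.val e
      rw [e, zapp_enc hm]
      exact pcond_iff.2 (h m hm)

/-- `F` is the forcing `ℚ`. -/
structure QF (F : ClassForcing 𝕄) : Prop where
  hP : F.P = {s : ZFSet | QCond 𝕄 s}
  hle : ∀ s' ∈ F.P, ∀ s ∈ F.P, (F.le s' s ↔ QLe s' s)

theorem QF.mem_iff {F : ClassForcing 𝕄} (hF : QF F) {s : Vt 𝕄} :
    s.1 ∈ F.P ↔ ∃ (f : ℕ → Vt 𝕄) (n : ℕ), (∀ i < n, PC (f i)) ∧ s = enc f n := by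
  rw [hF.hP]
  exact qcond_iff

theorem QF.enc_mem {F : ClassForcing 𝕄} (hF : QF F) {f : ℕ → Vt 𝕄} {n : ℕ} (h : ∀ i < n, PC (f i)) :
    (enc f n).1 ∈ F.P := hF.mem_iff.2 ⟨f, n, h, rfl⟩

theorem QF.le_iff {F : ClassForcing 𝕄} (hF : QF F) {f g : ℕ → Vt 𝕄} {n m : ℕ} (hf : ∀ i < n, PC (f i))
    (hg : ∀ i < m, PC (g i)) :
    F.le (enc f n).1 (enc g m).1 ↔ m ≤ n ∧ ∀ i < m, ∀ x, x ∈ g i → x ∈ f i := by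
  rw [hF.hle _ (hF.enc_mem hf) _ (hF.enc_mem hg), qle_enc]

/-! ### Total functions -/

/-- The characteristic function of `r`. -/
def chi (r : Vt 𝕄) : Vt 𝕄 :=
  Vt.img (fun v => Vt.pair (v 0) (if v 0 ∈ v 1 then nat 1 else nat 0)) Vt.omega (fun _ => r)

theorem chi_aux : DT (𝕄 := 𝕄) (fun v => Vt.pair (v 0) (if v 0 ∈ v 1 then nat 1 else nat 0)) :=
  (DT.var 0).pair (DT.ite (Dfn.mem 0 1) (DT.const _) (DT.const _))

theorem mem_chi {r x : Vt 𝕄} : x ∈ chi r ↔ ∃ n, x = Vt.pair (nat n) (if nat n ∈ r then nat 1 else nat 0) := by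
  rw [chi, chi_aux.mem_img]
  constructor
  · rintro ⟨y, hy, e⟩
    obtain ⟨n, rfl⟩ := mem_omega.1 hy
    exact ⟨n, e⟩
  · rintro ⟨n, e⟩
    exact ⟨_, nat_mem_omega n, e⟩

theorem nat_one_ne : (nat 1 : Vt 𝕄) ≠ nat 0 := fun h => by have := nat_inj.1 h; omega

theorem one_mem_chi {r : Vt 𝕄} {n : ℕ} : Vt.pair (nat n) (nat 1) ∈ chi r ↔ nat n ∈ r := by
  rw [mem_chi]
  constructor
  · rintro ⟨m, e⟩
    obtain ⟨e1, e2⟩ := Vt.pair_inj.1 e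
    cases nat_inj.1 e1
    by_contra h
    rw [if_neg h] at e2
    exact nat_one_ne e2
  · intro h
    exact ⟨n, by rw [if_pos h]⟩

theorem zero_mem_chi {r : Vt 𝕄} {n : ℕ} : Vt.pair (nat n) (nat 0) ∈ chi r ↔ ¬ nat n ∈ r := by
  rw [mem_chi]
  constructor
  · rintro ⟨m, e⟩ h
    obtain ⟨e1, e2⟩ := Vt.pair_inj.1 e
    cases nat_inj.1 e1
    rw [if_pos h] at e2
    exact nat_one_ne e2.symm
  · intro h
    exact ⟨n, by rw [if_neg h]⟩

theorem pc_chi (r : Vt 𝕄) : PC (chi r) := by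
  refine ⟨fun x hx => ?_, fun n h => ?_⟩
  · obtain ⟨n, rfl⟩ := mem_chi.1 hx
    refine ⟨n, ?_⟩
    by_cases h : nat n ∈ r
    · right; rw [if_pos h]
    · left; rw [if_neg h]
  · exact zero_mem_chi.1 h.1 (one_mem_chi.1 h.2)

theorem PC.total {b : Vt 𝕄} (hb : PC b) : ∃ r, ∀ x, x ∈ b → x ∈ chi r := by
  have h : Dfn 𝕄 (fun v => Vt.pair (v 0) (nat 1) ∈ v 1) :=
    Dfn.mem' ((DT.var 0).pair (DT.const _)) (DT.var 1)
  obtain ⟨r, hr⟩ := h.sep (fun _ => b) Vt.omega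
  have hr' : ∀ n, nat n ∈ r ↔ Vt.pair (nat n) (nat 1) ∈ b := by
    intro n
    rw [hr]
    exact and_iff_right (nat_mem_omega n)
  refine ⟨r, fun x hx => ?_⟩
  obtain ⟨n, rfl | rfl⟩ := hb.1 x hx
  · rw [zero_mem_chi, hr']
    exact fun h => hb.2 n ⟨hx, h⟩
  · rw [one_mem_chi, hr']
    exact hx

theorem DT.chi {s : (ℕ → Vt 𝕄) → Vt 𝕄} (hs : DT s) : DT (fun v => chi (s v)) := by
  refine DT.subst1 (f := CF.chi) ?_ hs
  refine (DT.img (a := fun _ => Vt.omega) ((DT.var 0).pair (DT.ite (Dfn.mem 0 1) (DT.const (nat 1)) (DT.const (nat 0))))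
    (DT.const _)).congr fun v => ?_
  apply Vt.ext
  intro z
  rw [CF.chi, chi_aux.mem_img, chi_aux.mem_img]
  rfl

/-- The condition `⟨∅, …, ∅, {(n,1)}⟩` with `{(n,1)}` in position `k`. -/
def pkn (k n : Vt 𝕄) : Vt 𝕄 :=
  Vt.union (Vt.img (fun v => Vt.pair (v 0) (nat 0)) k (fun _ => nat 0))
    (Vt.upair (Vt.pair k (Vt.upair (Vt.pair n (nat 1)) (Vt.pair n (nat 1))))
      (Vt.pair k (Vt.upair (Vt.pair n (nat 1)) (Vt.pair n (nat 1)))))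

theorem pkn_aux : DT (𝕄 := 𝕄) (fun v => Vt.pair (v 0) (nat 0)) := (DT.var 0).pair (DT.const _)

theorem DT.pkn {s t : (ℕ → Vt 𝕄) → Vt 𝕄} (hs : DT s) (ht : DT t) : DT (fun v => pkn (s v) (t v)) := by
  have h1 := (ht.pair (DT.const (nat 1)))
  have h2 := (hs.pair (h1.upair h1))
  refine DT.union ?_ (h2.upair h2)
  refine (DT.img pkn_aux hs).congr fun v => ?_
  apply Vt.ext
  intro z
  rw [pkn_aux.mem_img, pkn_aux.mem_img]
  rfl

/-- coordinates of `pkn` -/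
def pknf (k n : ℕ) (m : ℕ) : Vt 𝕄 :=
  if m < k then nat 0 else Vt.upair (Vt.pair (nat n) (nat 1)) (Vt.pair (nat n) (nat 1))

theorem pkn_eq (k n : ℕ) : (pkn (nat k) (nat n) : Vt 𝕄) = enc (pknf k n) (k+1) := by
  apply Vt.ext
  intro z
  rw [pkn, Vt.mem_union, pkn_aux.mem_img, mem_enc, Vt.mem_upair, or_self]
  constructor
  · rintro (⟨x, hx, e⟩ | e)
    · obtain ⟨m, hm, rfl⟩ := mem_nat.1 hx
      exact ⟨m, by omega, by rw [pknf, if_pos hm]; exact e⟩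
    · exact ⟨k, by omega, by rw [pknf, if_neg (by omega)]; exact e⟩
  · rintro ⟨m, hm, e⟩
    by_cases h : m < k
    · rw [pknf, if_pos h] at e
      exact Or.inl ⟨nat m, mem_nat.2 ⟨m, h, rfl⟩, e⟩
    · rw [pknf, if_neg h] at e
      obtain rfl : m = k := by omega
      exact Or.inr e

theorem pc_pknf (k n m : ℕ) : PC (pknf k n m : Vt 𝕄) := by
  rw [pknf]
  split
  · exact ⟨fun x hx => absurd hx (Vt.not_mem_empty x), fun _ h => Vt.not_mem_empty _ h.1⟩
  · refine ⟨fun x hx => ?_, fun i h => ?_⟩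
    · rw [Vt.mem_upair, or_self] at hx
      exact ⟨n, Or.inr hx⟩
    · have := h.1
      rw [Vt.mem_upair, or_self, Vt.pair_inj] at this
      exact nat_one_ne this.2.symm

/-! ### Generic reals -/

/-- The `n`-th bit of the `k`-th generic real. -/
def bit (𝕄 : GBModel.{u}) (G : Set ZFSet.{u}) (k n : ℕ) : Prop := (pkn (nat k : Vt 𝕄) (nat n)).1 ∈ G

variable {F : ClassForcing 𝕄} {G : Set ZFSet.{u}}

theorem QF.pkn_mem (hF : QF F) (k n : ℕ) : (pkn (nat k : Vt 𝕄) (nat n)).1 ∈ F.P := by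
  rw [pkn_eq]
  exact hF.enc_mem fun i _ => pc_pknf _ _ _

/-- `r` is the `k`-th generic real -/
def GR (G : Set ZFSet.{u}) (k : ℕ) (r : Vt 𝕄) : Prop := ∀ n, bit 𝕄 G k n ↔ nat n ∈ r

theorem QF.gr_of_mem (hF : QF F) (hG : Gen F G) {q r : Vt 𝕄} {k : ℕ} (hq : q.1 ∈ G)
    (h : Vt.pair (nat k) (chi r) ∈ q) : GR G k r := by
  obtain ⟨⟨h1, _, h2, h3⟩, _⟩ := hG
  intro n
  have hqP := h1 hq
  obtain ⟨f, N, hf, rfl⟩ := hF.mem_iff.1 hqP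
  obtain ⟨hk, e⟩ := pair_mem_enc.1 h
  constructor
  · intro hb
    obtain ⟨c, hc, hc1, hc2⟩ := h3 _ hq _ hb
    have hcP := h1 hc
    obtain ⟨g, L, hg, e'⟩ := (hF.mem_iff (s := ⟨c, 𝕄.classes_sub _ F.P_cls hcP⟩)).1 hcP
    have e' : c = (enc g L).1 := congrArg Vt.val e'
    subst e'
    rw [hF.le_iff hg hf] at hc1
    rw [pkn_eq, hF.le_iff hg (fun i _ => pc_pknf _ _ _)] at hc2
    have h5 := hc2.2 k (by omega) (Vt.pair (nat n) (nat 1)) (by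
      rw [pknf, if_neg (by omega), Vt.mem_upair, or_self])
    by_contra hn
    have h6 := hc1.2 k hk _ (e ▸ zero_mem_chi.2 hn)
    exact (hg k (by omega)).2 n ⟨h6, h5⟩
  · intro hn
    refine h2 _ hq _ (hF.pkn_mem k n) ?_
    rw [pkn_eq, hF.le_iff hf (fun i _ => pc_pknf _ _ _)]
    refine ⟨by omega, fun i hi x hx => ?_⟩
    rw [pknf] at hx
    split at hx
    · exact absurd hx (Vt.not_mem_empty x)
    · obtain rfl : i = k := by omega
      rw [Vt.mem_upair, or_self] at hx
      rw [hx, ← e, one_mem_chi]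
      exact hn

/-- extending a condition -/
theorem QF.extend (hF : QF F) {q : Vt 𝕄} (hq : q.1 ∈ F.P) (k : ℕ) (r : Vt 𝕄) :
    ∃ q' : Vt 𝕄, q'.1 ∈ F.P ∧ F.le q'.1 q.1 ∧ (∃ c, Vt.pair (nat k) (chi c) ∈ q') ∧
      ∃ m, Vt.pair (nat m) (chi r) ∈ q' := by
  obtain ⟨f, N, hf, rfl⟩ := hF.mem_iff.1 hq
  have h : ∀ i, ∃ c, i < N → ∀ x, x ∈ f i → x ∈ chi c := by
    intro i
    by_cases hi : i < N
    · obtain ⟨c, hc⟩ := (hf i hi).total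
      exact ⟨c, fun _ => hc⟩
    · exact ⟨r, fun h => absurd h hi⟩
  choose c hc using h
  have hg : ∀ i < N + k + 1, PC (𝕄 := 𝕄) ((fun m => if m < N then chi (c m) else chi r) i) := by
    intro i _
    dsimp only
    split <;> exact pc_chi _
  refine ⟨enc (fun m => if m < N then chi (c m) else chi r) (N + k + 1), hF.enc_mem hg, ?_, ?_, ?_⟩
  · rw [hF.le_iff hg hf]
    refine ⟨by omega, fun i hi x hx => ?_⟩
    rw [if_pos hi]
    exact hc i hi x hx
  · by_cases hk : k < N
    · exact ⟨c k, pair_mem_enc.2 ⟨by omega, by rw [if_pos hk]⟩⟩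
    · exact ⟨r, pair_mem_enc.2 ⟨by omega, by rw [if_neg hk]⟩⟩
  · exact ⟨N, pair_mem_enc.2 ⟨by omega, by simp⟩⟩

theorem Gen.meets (hG : Gen F G) {P : (ℕ → Vt 𝕄) → Prop} (hP : Dfn 𝕄 P) (v : ℕ → Vt 𝕄)
    (h : ∀ q : Vt 𝕄, q.1 ∈ F.P → ∃ q' : Vt 𝕄, q'.1 ∈ F.P ∧ F.le q'.1 q.1 ∧ P (scons q' v)) :
    ∃ q : Vt 𝕄, q.1 ∈ G ∧ P (scons q v) := by
  have hd := (hP.and (Dfn.cls _ F.P_cls 0)).mem_cls v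
  obtain ⟨x, hx, hxM, h1, h2⟩ := hG.2 _ hd ⟨by
    rintro x ⟨hx, h1, h2⟩
    exact h2, by
    intro p hp
    obtain ⟨q', h1, h2, h3⟩ := h ⟨p, 𝕄.classes_sub _ F.P_cls hp⟩ hp
    exact ⟨q'.1, ⟨q'.2, h3, h1⟩, h2⟩⟩
  exact ⟨⟨x, hxM⟩, hx, h1⟩

theorem QF.gr_exists (hF : QF F) (hG : Gen F G) (k : ℕ) : ∃ r : Vt 𝕄, GR G k r := by
  have hD : Dfn 𝕄 (fun v => ∃ r, Vt.pair (nat k) (chi r) ∈ v 0) :=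
    Dfn.ex (Dfn.mem' ((DT.const _).pair (DT.var 0).chi) (DT.var 1))
  obtain ⟨q, hq, r, h⟩ := hG.meets hD (fun _ => nat 0) (fun q hq => by
    obtain ⟨q', h1, h2, h3, h4⟩ := hF.extend hq k (nat 0)
    exact ⟨q', h1, h2, h3⟩)
  exact ⟨r, hF.gr_of_mem hG hq h⟩

theorem QF.gr_surj (hF : QF F) (hG : Gen F G) (r : Vt 𝕄) : ∃ k, GR G k r := by
  have hD : Dfn 𝕄 (fun v => ∃ m, m ∈ Vt.omega ∧ Vt.pair m (chi (v 1)) ∈ v 0) :=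
    Dfn.ex ((Dfn.mem' (DT.var 0) (DT.const _)).and
      (Dfn.mem' ((DT.var 0).pair (DT.var 2).chi) (DT.var 1)))
  obtain ⟨q, hq, m, hm, h⟩ := hG.meets hD (fun _ => r) (fun q hq => by
    obtain ⟨q', h1, h2, h3, m, h4⟩ := hF.extend hq 0 r
    exact ⟨q', h1, h2, nat m, nat_mem_omega m, h4⟩)
  obtain ⟨k, rfl⟩ := mem_omega.1 hm
  exact ⟨k, hF.gr_of_mem hG hq h⟩

end Conds

section Good
variable {𝕄 : GBModel.{u}}

/-! ### Predicates of generic reals expressible by equality of names -/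

/-- streams of numerals -/
def nv (v : ℕ → ℕ) : ℕ → Vt 𝕄 := fun n => nat (v n)

theorem scons_nv (i : ℕ) (v : ℕ → ℕ) : scons (nat i) (nv v) = (nv (scons i v) : ℕ → Vt 𝕄) := by
  funext n
  cases n <;> rfl

/-- `A` is expressible as the equality of names which are definable from the parameters -/
def Rep (F : ClassForcing 𝕄) (A : Set ZFSet.{u} → (ℕ → ℕ) → Prop) : Prop :=
  ∃ α β : (ℕ → Vt 𝕄) → Vt 𝕄, DT α ∧ DT β ∧ (∀ v, Name F (α (nv v)) ∧ Name F (β (nv v))) ∧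
    ∀ G, Gen F G → ∀ v, (A G v ↔ ev G (α (nv v)) = ev G (β (nv v)))

/-- single name -/
def osing (F : ClassForcing 𝕄) (a : Vt 𝕄) : Vt 𝕄 := Vt.upair (Vt.pair a (oneV F)) (Vt.pair a (oneV F))
/-- name for the unordered pair -/
def oup (F : ClassForcing 𝕄) (a b : Vt 𝕄) : Vt 𝕄 := Vt.upair (Vt.pair a (oneV F)) (Vt.pair b (oneV F))
/-- name for `{t(i,v) : i ∈ ω}` -/
def oS (F : ClassForcing 𝕄) (t : (ℕ → Vt 𝕄) → Vt 𝕄) (v : ℕ → Vt 𝕄) : Vt 𝕄 :=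
  Vt.img (fun w => Vt.pair (t w) (oneV F)) Vt.omega v

variable {F : ClassForcing 𝕄} {G : Set ZFSet.{u}}

theorem DT.oup {s t : (ℕ → Vt 𝕄) → Vt 𝕄} (hs : DT s) (ht : DT t) : DT (fun v => oup F (s v) (t v)) :=
  (hs.pair (DT.const _)).upair (ht.pair (DT.const _))

theorem DT.oS {t : (ℕ → Vt 𝕄) → Vt 𝕄} (ht : DT t) : DT (oS F t) :=
  (ht.pair (DT.const _)).img (DT.const _)

theorem name_oup {a b : Vt 𝕄} (ha : Name F a) (hb : Name F b) : Name F (oup F a b) := by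
  rw [name_iff]
  intro x hx
  rcases Vt.mem_upair.1 hx with rfl | rfl
  · exact ⟨_, _, rfl, F.one_mem, ha⟩
  · exact ⟨_, _, rfl, F.one_mem, hb⟩

theorem ev_oup (hG : Gen F G) {a b : Vt 𝕄} {z : ZFSet.{u}} :
    z ∈ ev G (oup F a b) ↔ z = ev G a ∨ z = ev G b := by
  rw [mem_ev]
  constructor
  · rintro ⟨τ, p, h, _, rfl⟩
    rcases Vt.mem_upair.1 h with h | h
    · left; rw [(Vt.pair_inj.1 h).1]
    · right; rw [(Vt.pair_inj.1 h).1]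
  · rintro (rfl | rfl)
    · exact ⟨a, oneV F, Vt.mem_upair.2 (Or.inl rfl), hG.one_mem, rfl⟩
    · exact ⟨b, oneV F, Vt.mem_upair.2 (Or.inr rfl), hG.one_mem, rfl⟩

theorem name_union {a b : Vt 𝕄} (ha : Name F a) (hb : Name F b) : Name F (Vt.union a b) := by
  rw [name_iff] at *
  intro x hx
  rcases Vt.mem_union.1 hx with h | h
  · exact ha x h
  · exact hb x h

theorem ev_union {a b : Vt 𝕄} {z : ZFSet.{u}} :
    z ∈ ev G (Vt.union a b) ↔ z ∈ ev G a ∨ z ∈ ev G b := by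
  simp only [mem_ev, Vt.mem_union]
  constructor
  · rintro ⟨τ, p, h | h, h1⟩
    · exact Or.inl ⟨τ, p, h, h1⟩
    · exact Or.inr ⟨τ, p, h, h1⟩
  · rintro (⟨τ, p, h, h1⟩ | ⟨τ, p, h, h1⟩)
    · exact ⟨τ, p, Or.inl h, h1⟩
    · exact ⟨τ, p, Or.inr h, h1⟩

theorem mem_oS {t : (ℕ → Vt 𝕄) → Vt 𝕄} (ht : DT t) {v : ℕ → ℕ} {x : Vt 𝕄} :
    x ∈ oS F t (nv v) ↔ ∃ i, x = Vt.pair (t (nv (scons i v))) (oneV F) := by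
  rw [oS, DT.mem_img (ht.pair (DT.const _))]
  constructor
  · rintro ⟨y, hy, e⟩
    obtain ⟨n, rfl⟩ := mem_omega.1 hy
    rw [scons_nv] at e
    exact ⟨n, e⟩
  · rintro ⟨n, e⟩
    exact ⟨nat n, nat_mem_omega n, by rw [scons_nv]; exact e⟩

theorem name_oS {t : (ℕ → Vt 𝕄) → Vt 𝕄} (ht : DT t) (hn : ∀ v, Name F (t (nv v))) (v : ℕ → ℕ) :
    Name F (oS F t (nv v)) := by
  rw [name_iff]
  intro x hx
  obtain ⟨i, rfl⟩ := (mem_oS ht).1 hx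
  exact ⟨_, _, rfl, F.one_mem, hn _⟩

theorem ev_oS (hG : Gen F G) {t : (ℕ → Vt 𝕄) → Vt 𝕄} (ht : DT t) {v : ℕ → ℕ} {z : ZFSet.{u}} :
    z ∈ ev G (oS F t (nv v)) ↔ ∃ i, z = ev G (t (nv (scons i v))) := by
  rw [mem_ev]
  constructor
  · rintro ⟨τ, p, h, _, rfl⟩
    obtain ⟨i, h⟩ := (mem_oS ht).1 h
    exact ⟨i, by rw [(Vt.pair_inj.1 h).1]⟩
  · rintro ⟨i, rfl⟩
    exact ⟨_, _, (mem_oS ht).2 ⟨i, rfl⟩, hG.one_mem, rfl⟩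

theorem ev_oup_ext (hG : Gen F G) {a b c d : Vt 𝕄} (h1 : ev G a = ev G c) (h2 : ev G b = ev G d) :
    ev G (oup F a b) = ev G (oup F c d) := by
  ext z
  rw [ev_oup hG, ev_oup hG, h1, h2]

theorem ev_oup_self (hG : Gen F G) {a b c : Vt 𝕄} (h : ev G (oup F a b) = ev G (oup F c c)) :
    ev G a = ev G b := by
  have h1 : ev G a ∈ ev G (oup F a b) := (ev_oup hG).2 (Or.inl rfl)
  have h2 : ev G b ∈ ev G (oup F a b) := (ev_oup hG).2 (Or.inr rfl)
  rw [h, ev_oup hG, or_self] at h1 h2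
  rw [h1, h2]

theorem Rep.congr {A B : Set ZFSet.{u} → (ℕ → ℕ) → Prop}
    (h : ∀ G, Gen F G → ∀ v, (A G v ↔ B G v)) (hA : Rep F A) : Rep F B := by
  obtain ⟨α, β, h1, h2, h3, h4⟩ := hA
  exact ⟨α, β, h1, h2, h3, fun G hG v => (h G hG v).symm.trans (h4 G hG v)⟩

theorem Rep.all {A : Set ZFSet.{u} → (ℕ → ℕ) → Prop} (hA : Rep F A) :
    Rep F (fun G v => ∀ i, A G (scons i v)) := by
  obtain ⟨α, β, h1, h2, h3, h4⟩ := hA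
  refine ⟨oS F (fun v => oup F (α v) (α v)), oS F (fun v => oup F (α v) (β v)),
    (h1.oup h1).oS, (h1.oup h2).oS, fun v => ⟨?_, ?_⟩, fun G hG v => ?_⟩
  · exact name_oS (h1.oup h1) (fun v => name_oup (h3 v).1 (h3 v).1) v
  · exact name_oS (h1.oup h2) (fun v => name_oup (h3 v).1 (h3 v).2) v
  · constructor
    · intro h
      ext z
      rw [ev_oS hG (h1.oup h1), ev_oS hG (h1.oup h2)]
      refine exists_congr fun i => ?_
      rw [ev_oup_ext hG rfl ((h4 G hG _).1 (h i))]
    · intro h i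
      rw [h4 G hG]
      have : ev G (oup F (α (nv (scons i v))) (β (nv (scons i v)))) ∈
          ev G (oS F (fun v => oup F (α v) (β v)) (nv v)) := (ev_oS hG (h1.oup h2)).2 ⟨i, rfl⟩
      rw [← h, ev_oS hG (h1.oup h1)] at this
      obtain ⟨j, hj⟩ := this
      exact ev_oup_self hG hj

theorem Rep.ex {A : Set ZFSet.{u} → (ℕ → ℕ) → Prop} (hA : Rep F A) :
    Rep F (fun G v => ∃ i, A G (scons i v)) := by
  obtain ⟨α, β, h1, h2, h3, h4⟩ := hA
  have hf : DT (oS F (fun v => oup F (α v) (α v))) := (h1.oup h1).oS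
  have nf : ∀ v, Name F (oS F (fun v => oup F (α v) (α v)) (nv v)) :=
    name_oS (h1.oup h1) (fun v => name_oup (h3 v).1 (h3 v).1)
  have hg : DT (fun w => Vt.union (oS F (fun v => oup F (α v) (α v)) (fun n => w (n+1)))
      (oup F (oup F (α w) (β w)) (oup F (α w) (β w)))) :=
    (hf.rename (fun n => n+1)).union ((h1.oup h2).oup (h1.oup h2))
  have ng : ∀ v, Name F (Vt.union (oS F (fun v => oup F (α v) (α v)) (fun n => nv v (n+1)))
      (oup F (oup F (α (nv v)) (β (nv v))) (oup F (α (nv v)) (β (nv v))))) := by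
    intro v
    have := name_oup (h3 v).1 (h3 v).2
    exact name_union (nf (fun n => v (n+1))) (name_oup this this)
  refine ⟨oS F _, fun v => Vt.union (oS F _ v) (oup F (oS F (fun v => oup F (α v) (α v)) v)
    (oS F (fun v => oup F (α v) (α v)) v)), hg.oS, hg.oS.union (hf.oup hf), fun v => ⟨?_, ?_⟩, fun G hG v => ?_⟩
  · exact name_oS hg ng v
  · exact name_union (name_oS hg ng v) (name_oup (nf v) (nf v))
  · constructor
    · rintro ⟨i, hi⟩
      ext z
      rw [ev_union, ev_oup hG, or_self]
      refine ⟨Or.inl, ?_⟩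
      rintro (h | rfl)
      · exact h
      · refine (ev_oS hG hg).2 ⟨i, ?_⟩
        ext z
        rw [ev_union, ev_oup hG, or_self]
        refine ⟨Or.inl, ?_⟩
        rintro (h | rfl)
        · exact h
        · refine (ev_oS hG (h1.oup h1)).2 ⟨i, ?_⟩
          exact ev_oup_ext hG rfl ((h4 G hG _).1 hi).symm
    · intro h
      have : ev G (oS F (fun v => oup F (α v) (α v)) (nv v)) ∈ ev G (Vt.union (oS F (fun w => Vt.union (oS F (fun v => oup F (α v) (α v)) (fun n => w (n+1)))
      (oup F (oup F (α w) (β w)) (oup F (α w) (β w)))) (nv v)) (oup F (oS F (fun v => oup F (α v) (α v)) (nv v))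
        (oS F (fun v => oup F (α v) (α v)) (nv v)))) := ev_union.2 (Or.inr ((ev_oup hG).2 (Or.inl rfl)))
      rw [← h, ev_oS hG hg] at this
      obtain ⟨j, hj⟩ := this
      have h5 : ev G (oup F (α (nv (scons j v))) (β (nv (scons j v)))) ∈
        ev G (oS F (fun v => oup F (α v) (α v)) (nv v)) := by
        rw [hj]
        exact ev_union.2 (Or.inr ((ev_oup hG).2 (Or.inl rfl)))
      obtain ⟨i, hi⟩ := (ev_oS hG (h1.oup h1)).1 h5
      exact ⟨j, (h4 G hG _).2 (ev_oup_self hG hi)⟩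

/-- decided predicates of numbers -/
def Dec (𝕄 : GBModel.{u}) (D : (ℕ → ℕ) → Prop) : Prop := ∃ P, Dfn 𝕄 P ∧ ∀ v, D v ↔ P (nv v)

theorem Rep.ite {D : (ℕ → ℕ) → Prop} (hD : Dec 𝕄 D) {A B : Set ZFSet.{u} → (ℕ → ℕ) → Prop}
    (hA : Rep F A) (hB : Rep F B) : Rep F (fun G v => if D v then A G v else B G v) := by
  obtain ⟨α, β, h1, h2, h3, h4⟩ := hA
  obtain ⟨α', β', h1', h2', h3', h4'⟩ := hB
  obtain ⟨P, hP, hDP⟩ := hD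
  refine ⟨fun v => if P v then α v else α' v, fun v => if P v then β v else β' v, DT.ite hP h1 h1',
    DT.ite hP h2 h2', fun v => ?_, fun G hG v => ?_⟩
  · by_cases h : P (nv v)
    · simp only [if_pos h]; exact h3 v
    · simp only [if_neg h]; exact h3' v
  · by_cases h : P (nv v)
    · simp only [if_pos h, if_pos ((hDP v).2 h)]; exact h4 G hG v
    · simp only [if_neg h, if_neg (mt (hDP v).1 h)]; exact h4' G hG v

theorem Rep.rename {A : Set ZFSet.{u} → (ℕ → ℕ) → Prop} (hA : Rep F A) (g : ℕ → ℕ) :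
    Rep F (fun G v => A G (fun n => v (g n))) := by
  obtain ⟨α, β, h1, h2, h3, h4⟩ := hA
  exact ⟨fun v => α (fun n => v (g n)), fun v => β (fun n => v (g n)), h1.rename g, h2.rename g,
    fun v => h3 (fun n => v (g n)), fun G hG v => h4 G hG (fun n => v (g n))⟩

theorem name_empty : Name F (Vt.empty : Vt 𝕄) := name_iff.2 fun x hx => absurd hx (Vt.not_mem_empty x)

/-- the name `{(∅, p)}` -/
def leaf (p : Vt 𝕄) : Vt 𝕄 := Vt.upair (Vt.pair Vt.empty p) (Vt.pair Vt.empty p)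

theorem DT.leaf {t : (ℕ → Vt 𝕄) → Vt 𝕄} (ht : DT t) : DT (fun v => leaf (t v)) :=
  ((DT.const _).pair ht).upair ((DT.const _).pair ht)

theorem name_leaf {p : Vt 𝕄} (hp : p.1 ∈ F.P) : Name F (leaf p) := by
  rw [name_iff]
  intro x hx
  rw [leaf, Vt.mem_upair, or_self] at hx
  exact ⟨_, _, hx, hp, name_empty⟩

theorem ev_leaf {p : Vt 𝕄} {z : ZFSet.{u}} : z ∈ ev G (leaf p) ↔ p.1 ∈ G ∧ z = ev G (Vt.empty : Vt 𝕄) := by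
  rw [mem_ev]
  constructor
  · rintro ⟨τ, q, h, hq, e⟩
    rw [leaf, Vt.mem_upair, or_self, Vt.pair_inj] at h
    obtain ⟨rfl, rfl⟩ := h
    exact ⟨hq, e⟩
  · rintro ⟨h, e⟩
    exact ⟨_, _, Vt.mem_upair.2 (Or.inl rfl), h, e⟩

theorem ev_empty {z : ZFSet.{u}} : ¬ z ∈ ev G (Vt.empty : Vt 𝕄) := by
  rw [mem_ev]
  rintro ⟨τ, p, h, _⟩
  exact Vt.not_mem_empty _ h

theorem rep_true : Rep F (fun _ _ => True) :=
  ⟨fun _ => Vt.empty, fun _ => Vt.empty, DT.const _, DT.const _, fun _ => ⟨name_empty, name_empty⟩,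
    fun _ _ _ => by simp⟩

theorem rep_false : Rep F (fun _ _ => False) :=
  ⟨fun _ => Vt.empty, fun _ => leaf (oneV F), DT.const _, DT.const _,
    fun _ => ⟨name_empty, name_leaf F.one_mem⟩, fun G hG _ => by
      refine ⟨False.elim, fun h => ?_⟩
      have : ev G (Vt.empty : Vt 𝕄) ∈ ev G (leaf (oneV F)) := ev_leaf.2 ⟨hG.one_mem, rfl⟩
      rw [← h] at this
      exact ev_empty this⟩

theorem rep_bit (hF : QF F) (i j : ℕ) : Rep F (fun G v => bit 𝕄 G (v i) (v j)) := by
  refine ⟨fun v => leaf (pkn (v i) (v j)), fun _ => leaf (oneV F), ((DT.var i).pkn (DT.var j)).leaf, DT.const _,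
    fun v => ⟨name_leaf (hF.pkn_mem _ _), name_leaf F.one_mem⟩, fun G hG v => ?_⟩
  constructor
  · intro h
    ext z
    rw [ev_leaf, ev_leaf, and_iff_right hG.one_mem]
    exact and_iff_right h
  · intro h
    have : ev G (Vt.empty : Vt 𝕄) ∈ ev G (leaf (oneV F)) := ev_leaf.2 ⟨hG.one_mem, rfl⟩
    rw [← h] at this
    exact (ev_leaf.1 this).1

theorem rep_nbit (hF : QF F) (i j : ℕ) : Rep F (fun G v => ¬ bit 𝕄 G (v i) (v j)) := by
  refine ⟨fun v => leaf (pkn (v i) (v j)), fun _ => Vt.empty, ((DT.var i).pkn (DT.var j)).leaf, DT.const _,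
    fun v => ⟨name_leaf (hF.pkn_mem _ _), name_empty⟩, fun G hG v => ?_⟩
  constructor
  · intro h
    ext z
    rw [ev_leaf]
    exact ⟨fun h' => absurd h'.1 h, fun h' => absurd h' ev_empty⟩
  · intro h hb
    have : ev G (Vt.empty : Vt 𝕄) ∈ ev G (leaf (pkn (nv v i : Vt 𝕄) (nv v j))) := ev_leaf.2 ⟨hb, rfl⟩
    rw [h] at this
    exact ev_empty this

/-- Predicates which, together with their negations, are expressible. -/
def Good (F : ClassForcing 𝕄) (A : Set ZFSet.{u} → (ℕ → ℕ) → Prop) : Prop :=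
  Rep F A ∧ Rep F (fun G v => ¬ A G v)

variable {A B : Set ZFSet.{u} → (ℕ → ℕ) → Prop}

theorem Good.congr (h : ∀ G, Gen F G → ∀ v, (A G v ↔ B G v)) (hA : Good F A) : Good F B :=
  ⟨hA.1.congr h, hA.2.congr fun G hG v => not_congr (h G hG v)⟩

theorem Good.not (hA : Good F A) : Good F (fun G v => ¬ A G v) :=
  ⟨hA.2, hA.1.congr fun G _ v => not_not.symm⟩

theorem Good.rename (hA : Good F A) (g : ℕ → ℕ) : Good F (fun G v => A G (fun n => v (g n))) :=
  ⟨hA.1.rename g, hA.2.rename g⟩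

theorem Good.ite {D : (ℕ → ℕ) → Prop} (hD : Dec 𝕄 D) (hA : Good F A) (hB : Good F B) :
    Good F (fun G v => if D v then A G v else B G v) :=
  ⟨Rep.ite hD hA.1 hB.1, (Rep.ite hD hA.2 hB.2).congr fun G _ v => by
    by_cases h : D v <;> simp [h]⟩

theorem Good.ex' (hA : Good F A) : Good F (fun G v => ∃ i, A G (scons i v)) :=
  ⟨hA.1.ex, hA.2.all.congr fun G _ v => by push Not; rfl⟩

theorem Good.ex {A : Set ZFSet.{u} → (ℕ → ℕ) → ℕ → Prop}
    (hA : Good F (fun G v => A G (fun n => v (n+1)) (v 0))) : Good F (fun G v => ∃ i, A G v i) :=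
  hA.ex'

theorem Good.or (hA : Good F A) (hB : Good F B) : Good F (fun G v => A G v ∨ B G v) := by
  have hD : Dec 𝕄 (fun v => v 0 = 0) := by
    refine ⟨fun v => v 0 = nat 0, Dfn.eq' (DT.var 0) (DT.const _), fun v => ?_⟩
    exact nat_inj.symm
  refine (Good.ite hD (hA.rename (fun n => n+1)) (hB.rename (fun n => n+1))).ex'.congr fun G hG v => ?_
  constructor
  · rintro ⟨i, h⟩
    split at h
    · exact Or.inl h
    · exact Or.inr h
  · rintro (h | h)
    · exact ⟨0, by rw [if_pos (by rfl)]; exact h⟩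
    · exact ⟨1, by rw [if_neg (by simp)]; exact h⟩

theorem Good.and (hA : Good F A) (hB : Good F B) : Good F (fun G v => A G v ∧ B G v) :=
  (hA.not.or hB.not).not.congr fun G _ v => by tauto

theorem Good.imp (hA : Good F A) (hB : Good F B) : Good F (fun G v => A G v → B G v) :=
  (hA.not.or hB).congr fun G _ v => by tauto

theorem Good.iff (hA : Good F A) (hB : Good F B) : Good F (fun G v => A G v ↔ B G v) :=
  ((hA.imp hB).and (hB.imp hA)).congr fun G _ v => by tauto

theorem Good.all {A : Set ZFSet.{u} → (ℕ → ℕ) → ℕ → Prop}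
    (hA : Good F (fun G v => A G (fun n => v (n+1)) (v 0))) : Good F (fun G v => ∀ i, A G v i) :=
  (Good.ex (A := fun G v i => ¬ A G v i) hA.not).not.congr fun G _ v => by push Not; rfl

theorem Good.bit (hF : QF F) (i j : ℕ) : Good F (fun G v => bit 𝕄 G (v i) (v j)) :=
  ⟨rep_bit hF i j, rep_nbit hF i j⟩

theorem Good.dec {D : (ℕ → ℕ) → Prop} (hD : Dec 𝕄 D) : Good F (fun _ v => D v) := by
  have ht : Good F (fun _ _ => True) := ⟨rep_true, rep_false.congr fun _ _ _ => by simp⟩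
  refine (Good.ite hD ht ht.not).congr fun G _ v => ?_
  by_cases h : D v <;> simp [h]

theorem Good.eq (i j : ℕ) : Good F (fun _ v => v i = v j) := 
  Good.dec ⟨fun v => v i = v j, Dfn.eq i j, fun _ => nat_inj.symm⟩

theorem Good.eqc (i c : ℕ) : Good F (fun _ v => v i = c) := 
  Good.dec ⟨fun v => v i = nat c, Dfn.eq' (DT.var i) (DT.const _), fun _ => nat_inj.symm⟩

theorem Good.memc (i : ℕ) (r : Vt 𝕄) : Good F (fun _ v => nat (v i) ∈ r) := 
  Good.dec ⟨fun v => v i ∈ r, Dfn.mem' (DT.var i) (DT.const _), fun _ => Iff.rfl⟩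

end Good

section Coding
variable {𝕄 : GBModel.{u}}

/-! ### Coding of sets by reals -/

/-- `f` is a set of `M` which is the graph of the pairing function `j` -/
structure Jc (f : Vt 𝕄) (j : ℕ → ℕ → ℕ) : Prop where
  spec : ∀ a b y, Vt.pair (Vt.pair (nat a) (nat b)) y ∈ f ↔ y = nat (j a b)
  inj : ∀ a b c d, j a b = j c d → a = c ∧ b = d

theorem exists_inj (hctbl : AllSetsCountable 𝕄) (x : Vt 𝕄) : ∃ f : Vt 𝕄,
    (∀ z, z ∈ f → ∃ a n, z = Vt.pair a (nat n) ∧ a ∈ x) ∧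
    (∀ a, a ∈ x → ∃ n, Vt.pair a (nat n) ∈ f) ∧
    (∀ a b c, Vt.pair a b ∈ f → Vt.pair a c ∈ f → b = c) ∧
    (∀ a b c, Vt.pair a b ∈ f → Vt.pair c b ∈ f → a = c) := by
  obtain ⟨f, hf, h1, h2, h3, h4⟩ := hctbl x.1 x.2
  refine ⟨⟨f, hf⟩, ?_, ?_, ?_, ?_⟩
  · intro z hz
    obtain ⟨a, b, e, ha, hb⟩ := h1 z.1 hz
    obtain ⟨n, hn⟩ := mem_omega.1 (show (⟨b, 𝕄.transitive _ 𝕄.omega_mem _ hb⟩ : Vt 𝕄) ∈ Vt.omega from hb)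
    refine ⟨⟨a, 𝕄.transitive _ x.2 _ ha⟩, n, ?_, ha⟩
    rw [← hn]
    exact Vt.val_inj (by rw [Vt.pair_val]; exact e)
  · intro a ha
    obtain ⟨b, hb⟩ := h3 a.1 ha
    obtain ⟨a', b', e, _, hb2⟩ := h1 _ hb
    obtain ⟨e1, e2⟩ := ZFSet.pair_inj.1 e
    subst e1 e2
    obtain ⟨n, hn⟩ := mem_omega.1 (show (⟨b, 𝕄.transitive _ 𝕄.omega_mem _ hb2⟩ : Vt 𝕄) ∈ Vt.omega from hb2)
    refine ⟨n, ?_⟩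
    rw [← hn, Vt.mem_def, Vt.pair_val]
    exact hb
  · intro a b c hb hc
    rw [Vt.mem_def, Vt.pair_val] at hb hc
    exact Vt.val_inj (h2 _ _ _ hb hc)
  · intro a b c hb hc
    rw [Vt.mem_def, Vt.pair_val] at hb hc
    exact Vt.val_inj (h4 _ _ _ hb hc)

theorem exists_Jc (hctbl : AllSetsCountable 𝕄) : ∃ (f : Vt 𝕄) (j : ℕ → ℕ → ℕ), Jc f j := by
  have t1 : DT (𝕄 := 𝕄) (fun w => Vt.pair (w 1) (w 0)) := (DT.var 1).pair (DT.var 0)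
  have t2 : DT (𝕄 := 𝕄) (fun v => Vt.img (fun w => Vt.pair (w 1) (w 0)) Vt.omega v) := t1.img (DT.const _)
  have hW : ∀ a b : ℕ, Vt.pair (nat a) (nat b) ∈
      Vt.sUnion (Vt.img (fun v => Vt.img (fun w => Vt.pair (w 1) (w 0)) Vt.omega v) Vt.omega (fun _ => (nat 0 : Vt 𝕄))) := by
    intro a b
    rw [Vt.mem_sUnion]
    refine ⟨_, t2.mem_img.2 ⟨nat a, nat_mem_omega a, rfl⟩, t1.mem_img.2 ⟨nat b, nat_mem_omega b, rfl⟩⟩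
  obtain ⟨f, _, h2, h3, h4⟩ := exists_inj hctbl (Vt.sUnion (Vt.img (fun v => Vt.img (fun w => Vt.pair (w 1) (w 0)) Vt.omega v) Vt.omega (fun _ => (nat 0 : Vt 𝕄))))
  have : ∀ a b : ℕ, ∃ n, Vt.pair (Vt.pair (nat a) (nat b)) (nat n) ∈ f := fun a b => h2 _ (hW a b)
  choose j hj using this
  refine ⟨f, j, fun a b y => ⟨fun h => h3 _ _ _ h (hj a b), fun h => h ▸ hj a b⟩, fun a b c d e => ?_⟩
  have := h4 _ _ _ (hj a b) (e ▸ hj c d)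
  obtain ⟨e1, e2⟩ := Vt.pair_inj.1 this
  exact ⟨nat_inj.1 e1, nat_inj.1 e2⟩

/-- The relation on `ω` coded by `r`. -/
def Er (f r a b : Vt 𝕄) : Prop := ∃ c, c ∈ r ∧ Vt.pair (Vt.pair a b) c ∈ f

theorem Jc.er_iff {f : Vt 𝕄} {j : ℕ → ℕ → ℕ} (h : Jc f j) {r : Vt 𝕄} {a b : ℕ} :
    Er f r (nat a) (nat b) ↔ nat (j a b) ∈ r := by
  constructor
  · rintro ⟨c, hc, h1⟩
    rw [h.spec] at h1
    exact h1 ▸ hc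
  · intro h1
    exact ⟨_, h1, (h.spec _ _ _).2 rfl⟩

/-- bisimulations between `ω` with the relation coded by `r`, and `M` -/
def Bis (f r b : Vt 𝕄) : Prop := ∀ a x, Vt.pair x a ∈ b →
  (∀ c, c ∈ Vt.omega → Er f r c a → ∃ y, y ∈ x ∧ Vt.pair y c ∈ b) ∧
  (∀ y, y ∈ x → ∃ c, c ∈ Vt.omega ∧ Er f r c a ∧ Vt.pair y c ∈ b)

/-- `a` codes `x` via `r` -/
def Col (f r a x : Vt 𝕄) : Prop := ∃ b, Bis f r b ∧ Vt.pair x a ∈ b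

/-- `r` codes a well-founded relation -/
def WF (f r : Vt 𝕄) : Prop := ∀ s : Vt 𝕄, (∃ a : Vt 𝕄, a ∈ Vt.omega ∧ a ∈ s) →
  ∃ a : Vt 𝕄, (a ∈ Vt.omega ∧ a ∈ s) ∧ ∀ c, c ∈ Vt.omega → c ∈ s → ¬ Er f r c a

theorem Dfn.er (f : Vt 𝕄) (i k l : ℕ) : Dfn 𝕄 (fun v => Er f (v i) (v k) (v l)) :=
  Dfn.ex ((Dfn.mem 0 _).and (Dfn.mem' (((DT.var _).pair (DT.var _)).pair (DT.var _)) (DT.const f)))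

theorem Dfn.inom (i : ℕ) : Dfn 𝕄 (fun v => v i ∈ (Vt.omega : Vt 𝕄)) := Dfn.mem' (DT.var i) (DT.const _)

theorem Dfn.pin (i j k : ℕ) : Dfn 𝕄 (fun v => Vt.pair (v i) (v j) ∈ v k) :=
  Dfn.mem' ((DT.var i).pair (DT.var j)) (DT.var k)

theorem Dfn.bis (f : Vt 𝕄) (i k : ℕ) : Dfn 𝕄 (fun v => Bis f (v i) (v k)) := by
  refine Dfn.all (Dfn.all ((Dfn.pin _ _ _).imp (Dfn.and ?_ ?_)))
  · exact Dfn.all ((Dfn.inom _).imp ((Dfn.er f _ _ _).imp (Dfn.ex ((Dfn.mem _ _).and (Dfn.pin _ _ _)))))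
  · exact Dfn.all ((Dfn.mem _ _).imp (Dfn.ex ((Dfn.inom _).and ((Dfn.er f _ _ _).and (Dfn.pin _ _ _)))))

theorem Dfn.col (f : Vt 𝕄) (i k l : ℕ) : Dfn 𝕄 (fun v => Col f (v i) (v k) (v l)) :=
  Dfn.ex ((Dfn.bis f _ _).and (Dfn.pin _ _ _))

theorem Dfn.wf (f : Vt 𝕄) (i : ℕ) : Dfn 𝕄 (fun v => WF f (v i)) :=
  Dfn.all ((Dfn.ex ((Dfn.inom _).and (Dfn.mem _ _))).imp (Dfn.ex (((Dfn.inom _).and (Dfn.mem _ _)).and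
    (Dfn.all ((Dfn.inom _).imp ((Dfn.mem _ _).imp (Dfn.er f _ _ _).not))))))

theorem Col.forth {f r a x c : Vt 𝕄} (h : Col f r a x) (hc : c ∈ Vt.omega) (he : Er f r c a) :
    ∃ y, y ∈ x ∧ Col f r c y := by
  obtain ⟨b, hb, hx⟩ := h
  obtain ⟨y, hy, h1⟩ := (hb _ _ hx).1 c hc he
  exact ⟨y, hy, b, hb, h1⟩

theorem Col.back {f r a x y : Vt 𝕄} (h : Col f r a x) (hy : y ∈ x) :
    ∃ c, c ∈ Vt.omega ∧ Er f r c a ∧ Col f r c y := by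
  obtain ⟨b, hb, hx⟩ := h
  obtain ⟨c, hc, he, h1⟩ := (hb _ _ hx).2 y hy
  exact ⟨c, hc, he, b, hb, h1⟩

theorem col_eq_of_bisim {f k l : Vt 𝕄} (Z : Vt 𝕄 → Vt 𝕄 → Prop)
    (hZ : ∀ a b, a ∈ Vt.omega → b ∈ Vt.omega → Z a b →
      (∀ c, c ∈ Vt.omega → Er f k c a → ∃ d, d ∈ Vt.omega ∧ Er f l d b ∧ Z c d) ∧
      (∀ d, d ∈ Vt.omega → Er f l d b → ∃ c, c ∈ Vt.omega ∧ Er f k c a ∧ Z c d)) (x : Vt 𝕄) :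
    ∀ y a b, a ∈ Vt.omega → b ∈ Vt.omega → Z a b → Col f k a x → Col f l b y → x = y := by
  induction x using Vt.induct with
  | h x ih =>
  intro y a b ha hb hz hx hy
  apply Vt.ext
  intro z
  constructor
  · intro hzx
    obtain ⟨c, hc, he, h1⟩ := hx.back hzx
    obtain ⟨d, hd, he', hz'⟩ := (hZ a b ha hb hz).1 c hc he
    obtain ⟨y', hy', h2⟩ := hy.forth hd he'
    rw [ih z hzx y' c d hc hd hz' h1 h2]
    exact hy'
  · intro hzy
    obtain ⟨d, hd, he, h1⟩ := hy.back hzy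
    obtain ⟨c, hc, he', hz'⟩ := (hZ a b ha hb hz).2 d hd he
    obtain ⟨x', hx', h2⟩ := hx.forth hc he'
    rw [← ih x' hx' z c d hc hd hz' h2 h1]
    exact hx'

theorem Col.unique {f r a x y : Vt 𝕄} (ha : a ∈ Vt.omega) (hx : Col f r a x) (hy : Col f r a y) : x = y :=
  col_eq_of_bisim (k := r) (l := r) (fun a b => a = b) (by
    rintro a _ _ _ rfl
    exact ⟨fun c hc he => ⟨c, hc, he, rfl⟩, fun c hc he => ⟨c, hc, he, rfl⟩⟩) x y a a ha ha rfl hx hy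

theorem WF.col_exists {f r : Vt 𝕄} (h : WF f r) (a : Vt 𝕄) (ha : a ∈ Vt.omega) : ∃ x, Col f r a x := by
  by_contra hcon
  have d1 : Dfn 𝕄 (fun v => ¬ ∃ x, Col f (v 1) (v 0) x) := (Dfn.ex (Dfn.col f _ _ _)).not
  obtain ⟨s, hs⟩ := d1.sep (fun _ => r) Vt.omega
  obtain ⟨a0, ⟨ha0, ha0s⟩, hmin⟩ := h s ⟨a, ha, (hs a).2 ⟨ha, hcon⟩⟩
  have hno : ¬ ∃ x, Col f r a0 x := ((hs a0).1 ha0s).2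
  apply hno
  have hpre : ∀ c, c ∈ Vt.omega → Er f r c a0 → ∃ x, Col f r c x := by
    intro c hc he
    by_contra hx
    exact hmin c hc ((hs c).2 ⟨hc, hx⟩) he
  -- predecessors
  have d2 : Dfn 𝕄 (fun v => Er f (v 1) (v 0) (v 2)) := Dfn.er f _ _ _
  obtain ⟨p, hp⟩ := d2.sep (scons r (fun _ => a0)) Vt.omega
  have hp' : ∀ c, c ∈ p ↔ c ∈ Vt.omega ∧ Er f r c a0 := hp
  obtain ⟨B, hB⟩ := Dfn.coll (P := fun v c b => Bis f (v 0) b ∧ ∃ x, Vt.pair x c ∈ b)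
    ((Dfn.bis f 2 1).and (Dfn.ex (Dfn.pin 0 1 2))) (fun _ => r) p (fun c hc => by
      obtain ⟨hc1, hc2⟩ := (hp' c).1 hc
      obtain ⟨x, b, hb, hx⟩ := hpre c hc1 hc2
      exact ⟨b, hb, x, hx⟩)
  obtain ⟨B', hB'⟩ := (Dfn.bis f 1 0).sep (fun _ => r) B
  have hB' : ∀ b, b ∈ B' ↔ b ∈ B ∧ Bis f r b := hB'
  have hU : Bis f r (Vt.sUnion B') := by
    intro a x hx
    obtain ⟨b, hb, hxb⟩ := Vt.mem_sUnion.1 hx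
    obtain ⟨h1, h2⟩ := ((hB' b).1 hb).2 a x hxb
    constructor
    · intro c hc he
      obtain ⟨y, hy, hyc⟩ := h1 c hc he
      exact ⟨y, hy, Vt.mem_sUnion.2 ⟨b, hb, hyc⟩⟩
    · intro y hy
      obtain ⟨c, hc, he, hyc⟩ := h2 y hy
      exact ⟨c, hc, he, Vt.mem_sUnion.2 ⟨b, hb, hyc⟩⟩
  have d3 : Dfn 𝕄 (fun v => ∃ c, c ∈ v 1 ∧ Vt.pair (v 0) c ∈ v 2) :=
    Dfn.ex ((Dfn.mem _ _).and (Dfn.pin _ _ _))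
  obtain ⟨x, hx⟩ := d3.sep (scons p (fun _ => Vt.sUnion B')) (Vt.sUnion (Vt.sUnion (Vt.sUnion B')))
  have hx' : ∀ y, y ∈ x ↔ ∃ c, c ∈ p ∧ Vt.pair y c ∈ Vt.sUnion B' := by
    intro y
    refine (hx y).trans (and_iff_right_of_imp ?_)
    rintro ⟨c, _, hc⟩
    refine Vt.mem_sUnion.2 ⟨Vt.upair y y, Vt.mem_sUnion.2 ⟨_, hc, ?_⟩, ?_⟩
    · exact Vt.mem_upair.2 (Or.inl rfl)
    · exact Vt.mem_upair.2 (Or.inl rfl)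
  refine ⟨x, Vt.union (Vt.sUnion B') (Vt.upair (Vt.pair x a0) (Vt.pair x a0)), ?_,
    Vt.mem_union.2 (Or.inr (Vt.mem_upair.2 (Or.inl rfl)))⟩
  intro a z hz
  rcases Vt.mem_union.1 hz with hz | hz
  · obtain ⟨h1, h2⟩ := hU a z hz
    constructor
    · intro c hc he
      obtain ⟨y, hy, hyc⟩ := h1 c hc he
      exact ⟨y, hy, Vt.mem_union.2 (Or.inl hyc)⟩
    · intro y hy
      obtain ⟨c, hc, he, hyc⟩ := h2 y hy
      exact ⟨c, hc, he, Vt.mem_union.2 (Or.inl hyc)⟩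
  · rw [Vt.mem_upair, or_self, Vt.pair_inj] at hz
    obtain ⟨rfl, rfl⟩ := hz
    constructor
    · intro c hc he
      have hcp := (hp' c).2 ⟨hc, he⟩
      obtain ⟨b, hb, hb2, y, hy⟩ := hB c hcp
      have : Vt.pair y c ∈ Vt.sUnion B' := Vt.mem_sUnion.2 ⟨b, (hB' b).2 ⟨hb, hb2⟩, hy⟩
      exact ⟨y, (hx' y).2 ⟨c, hcp, this⟩, Vt.mem_union.2 (Or.inl this)⟩
    · intro y hy
      obtain ⟨c, hc, hyc⟩ := (hx' y).1 hy
      obtain ⟨hc1, hc2⟩ := (hp' c).1 hc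
      exact ⟨c, hc1, hc2, Vt.mem_union.2 (Or.inl hyc)⟩

theorem exists_trans (x : Vt 𝕄) : ∃ t : Vt 𝕄, x ∈ t ∧ ∀ y, y ∈ t → ∀ z, z ∈ y → z ∈ t := by
  induction x using Vt.induct with
  | h x ih =>
  have d : Dfn 𝕄 (fun v => ∀ y, y ∈ v 0 → ∀ z, z ∈ y → z ∈ v 0) :=
    Dfn.all ((Dfn.mem _ _).imp (Dfn.all ((Dfn.mem _ _).imp (Dfn.mem _ _))))
  obtain ⟨B, hB⟩ := Dfn.coll (P := fun _ x t => x ∈ t ∧ ∀ y, y ∈ t → ∀ z, z ∈ y → z ∈ t)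
    ((Dfn.mem _ _).and (d.rename (fun n => n+1))) (fun _ => x) x ih
  obtain ⟨B', hB'⟩ := d.sep (fun _ => x) B
  have hB' : ∀ b, b ∈ B' ↔ b ∈ B ∧ ∀ y, y ∈ b → ∀ z, z ∈ y → z ∈ b := hB'
  refine ⟨Vt.union (Vt.sUnion B') (Vt.upair x x), Vt.mem_union.2 (Or.inr (Vt.mem_upair.2 (Or.inl rfl))), ?_⟩
  intro y hy z hz
  refine Vt.mem_union.2 (Or.inl ?_)
  rcases Vt.mem_union.1 hy with hy | hy
  · obtain ⟨b, hb, hyb⟩ := Vt.mem_sUnion.1 hy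
    exact Vt.mem_sUnion.2 ⟨b, hb, ((hB' b).1 hb).2 y hyb z hz⟩
  · rw [Vt.mem_upair, or_self] at hy
    subst hy
    obtain ⟨t, ht, h1, h2⟩ := hB z hz
    exact Vt.mem_sUnion.2 ⟨t, (hB' t).2 ⟨ht, h2⟩, h1⟩

theorem exists_code (hctbl : AllSetsCountable 𝕄) {f : Vt 𝕄} {j : ℕ → ℕ → ℕ} (hf : Jc f j) (x : Vt 𝕄) :
    ∃ (r : Vt 𝕄) (n : ℕ), WF f r ∧ Col f r (nat n) x := by
  obtain ⟨t, hxt, ht⟩ := exists_trans x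
  obtain ⟨g, g1, g2, g3, g4⟩ := exists_inj hctbl t
  have d : Dfn 𝕄 (fun v => ∃ p q, (q ∈ v 1 ∧ p ∈ q) ∧ ∃ c d, (Vt.pair p c ∈ v 2 ∧ Vt.pair q d ∈ v 2) ∧
      Vt.pair (Vt.pair c d) (v 0) ∈ f) :=
    Dfn.ex (Dfn.ex (((Dfn.mem _ _).and (Dfn.mem _ _)).and (Dfn.ex (Dfn.ex
      (((Dfn.pin _ _ _).and (Dfn.pin _ _ _)).and
        (Dfn.mem' (((DT.var _).pair (DT.var _)).pair (DT.var _)) (DT.const f)))))))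
  obtain ⟨r, hr⟩ := d.sep (scons t (fun _ => g)) Vt.omega
  have hr : ∀ n, n ∈ r ↔ n ∈ Vt.omega ∧ ∃ p q, (q ∈ t ∧ p ∈ q) ∧ ∃ c d, (Vt.pair p c ∈ g ∧ Vt.pair q d ∈ g) ∧
      Vt.pair (Vt.pair c d) n ∈ f := hr
  have gnat : ∀ a c, Vt.pair a c ∈ g → a ∈ t ∧ ∃ n, c = nat n := by
    intro a c h
    obtain ⟨a', n, e, ha⟩ := g1 _ h
    obtain ⟨rfl, rfl⟩ := Vt.pair_inj.1 e
    exact ⟨ha, n, rfl⟩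
  have er : ∀ a b : ℕ, Er f r (nat a) (nat b) ↔ ∃ p q, (q ∈ t ∧ p ∈ q) ∧ Vt.pair p (nat a) ∈ g ∧ Vt.pair q (nat b) ∈ g := by
    intro a b
    rw [hf.er_iff, hr, and_iff_right (nat_mem_omega _)]
    constructor
    · rintro ⟨p, q, h1, c, d, ⟨hc, hd⟩, h2⟩
      obtain ⟨_, c, rfl⟩ := gnat _ _ hc
      obtain ⟨_, d, rfl⟩ := gnat _ _ hd
      rw [hf.spec, nat_inj] at h2
      obtain ⟨rfl, rfl⟩ := hf.inj _ _ _ _ h2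
      exact ⟨p, q, h1, hc, hd⟩
    · rintro ⟨p, q, h1, hc, hd⟩
      exact ⟨p, q, h1, _, _, ⟨hc, hd⟩, (hf.spec _ _ _).2 rfl⟩
  have hb : Bis f r g := by
    intro a x hx
    obtain ⟨hxt, a, rfl⟩ := gnat _ _ hx
    constructor
    · intro c hc he
      obtain ⟨c, rfl⟩ := mem_omega.1 hc
      obtain ⟨p, q, ⟨hq, hpq⟩, h1, h2⟩ := (er _ _).1 he
      cases g4 _ _ _ h2 hx
      exact ⟨p, hpq, h1⟩
    · intro y hy
      have hyt := ht x hxt y hy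
      obtain ⟨c, hc⟩ := g2 y hyt
      exact ⟨nat c, nat_mem_omega c, (er _ _).2 ⟨y, x, ⟨hxt, hy⟩, hc, hx⟩, hc⟩
  obtain ⟨n, hn⟩ := g2 x hxt
  refine ⟨r, n, ?_, g, hb, hn⟩
  intro s hs
  have key : ∀ q : Vt 𝕄, ∀ a, Vt.pair q a ∈ g → a ∈ s →
      ∃ a, (a ∈ Vt.omega ∧ a ∈ s) ∧ ∀ c, c ∈ Vt.omega → c ∈ s → ¬ Er f r c a := by
    intro q
    induction q using Vt.induct with
    | h q ih =>
    intro a hqa has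
    obtain ⟨hqt, a, rfl⟩ := gnat _ _ hqa
    by_cases hex : ∃ p, p ∈ q ∧ ∃ c, Vt.pair p c ∈ g ∧ c ∈ s
    · obtain ⟨p, hp, c, hc, hcs⟩ := hex
      exact ih p hp c hc hcs
    · refine ⟨nat a, ⟨nat_mem_omega a, has⟩, fun c hc hcs he => hex ?_⟩
      obtain ⟨c, rfl⟩ := mem_omega.1 hc
      obtain ⟨p, q', ⟨hq, hpq⟩, h1, h2⟩ := (er _ _).1 he
      cases g4 _ _ _ h2 hqa
      exact ⟨p, hpq, _, h1, hcs⟩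
  obtain ⟨a, ha, has⟩ := hs
  by_cases hex : ∃ q, Vt.pair q a ∈ g
  · obtain ⟨q, hq⟩ := hex
    exact key q a hq has
  · refine ⟨a, ⟨ha, has⟩, fun c hc hcs he => hex ?_⟩
    obtain ⟨c, rfl⟩ := mem_omega.1 hc
    obtain ⟨a, rfl⟩ := mem_omega.1 ha
    obtain ⟨p, q', _, h1, h2⟩ := (er _ _).1 he
    exact ⟨_, h2⟩

/-- Equality of coded sets, in terms of reals. -/
theorem col_eq_iff {f : Vt 𝕄} {j : ℕ → ℕ → ℕ} (hf : Jc f j) {k l x y : Vt 𝕄} {a b : ℕ}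
    (hx : Col f k (nat a) x) (hy : Col f l (nat b) y) :
    x = y ↔ ∃ z : Vt 𝕄, nat (j a b) ∈ z ∧ ∀ a b, nat (j a b) ∈ z →
      (∀ c, nat (j c a) ∈ k → ∃ d, nat (j d b) ∈ l ∧ nat (j c d) ∈ z) ∧
      (∀ d, nat (j d b) ∈ l → ∃ c, nat (j c a) ∈ k ∧ nat (j c d) ∈ z) := by
  constructor
  · rintro rfl
    have d : Dfn 𝕄 (fun v => ∃ a b w, (Col f (v 1) a w ∧ Col f (v 2) b w) ∧
        (a ∈ Vt.omega ∧ b ∈ Vt.omega) ∧ Vt.pair (Vt.pair a b) (v 0) ∈ f) :=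
      Dfn.ex (Dfn.ex (Dfn.ex (((Dfn.col f _ _ _).and (Dfn.col f _ _ _)).and
        (((Dfn.inom _).and (Dfn.inom _)).and
          (Dfn.mem' (((DT.var _).pair (DT.var _)).pair (DT.var _)) (DT.const f))))))
    obtain ⟨z, hz⟩ := d.sep (scons k (fun _ => l)) Vt.omega
    have hz' : ∀ a b : ℕ, nat (j a b) ∈ z ↔ ∃ w, Col f k (nat a) w ∧ Col f l (nat b) w := by
      intro a b
      rw [hz, and_iff_right (nat_mem_omega _)]
      constructor
      · rintro ⟨a', b', w, h1, ⟨h2, h3⟩, h4⟩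
        obtain ⟨a', rfl⟩ := mem_omega.1 h2
        obtain ⟨b', rfl⟩ := mem_omega.1 h3
        have h4 := nat_inj.1 ((hf.spec _ _ _).1 h4)
        obtain ⟨rfl, rfl⟩ := hf.inj _ _ _ _ h4
        exact ⟨w, h1⟩
      · rintro ⟨w, h1⟩
        exact ⟨nat a, nat b, w, h1, ⟨nat_mem_omega a, nat_mem_omega b⟩, (hf.spec _ _ _).2 rfl⟩
    refine ⟨z, (hz' a b).2 ⟨x, hx, hy⟩, fun a b hab => ?_⟩
    obtain ⟨w, h1, h2⟩ := (hz' a b).1 hab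
    constructor
    · intro c hc
      obtain ⟨w', hw', h3⟩ := h1.forth (nat_mem_omega c) (hf.er_iff.2 hc)
      obtain ⟨d, hd, h4, h5⟩ := h2.back hw'
      obtain ⟨d, rfl⟩ := mem_omega.1 hd
      exact ⟨d, hf.er_iff.1 h4, (hz' c d).2 ⟨w', h3, h5⟩⟩
    · intro d hd
      obtain ⟨w', hw', h3⟩ := h2.forth (nat_mem_omega d) (hf.er_iff.2 hd)
      obtain ⟨c, hc, h4, h5⟩ := h1.back hw'
      obtain ⟨c, rfl⟩ := mem_omega.1 hc
      exact ⟨c, hf.er_iff.1 h4, (hz' c d).2 ⟨w', h5, h3⟩⟩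
  · rintro ⟨z, hz, hb⟩
    refine col_eq_of_bisim (f := f) (k := k) (l := l) (Er f z) ?_ x y (nat a) (nat b) (nat_mem_omega _)
      (nat_mem_omega _) (hf.er_iff.2 hz) hx hy
    intro a b ha hb' hab
    obtain ⟨a, rfl⟩ := mem_omega.1 ha
    obtain ⟨b, rfl⟩ := mem_omega.1 hb'
    obtain ⟨h1, h2⟩ := hb a b (hf.er_iff.1 hab)
    constructor
    · intro c hc he
      obtain ⟨c, rfl⟩ := mem_omega.1 hc
      obtain ⟨d, hd, h3⟩ := h1 c (hf.er_iff.1 he)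
      exact ⟨nat d, nat_mem_omega d, hf.er_iff.2 hd, hf.er_iff.2 h3⟩
    · intro d hd he
      obtain ⟨d, rfl⟩ := mem_omega.1 hd
      obtain ⟨c, hc, h3⟩ := h2 d (hf.er_iff.1 he)
      exact ⟨nat c, nat_mem_omega c, hf.er_iff.2 hc, hf.er_iff.2 h3⟩

end Coding

section Translation
variable {𝕄 : GBModel.{u}} {F : ClassForcing 𝕄} {f : Vt 𝕄} {j : ℕ → ℕ → ℕ}

/-! ### Translating first-order truth in `M` to statements about the generic reals -/

theorem Good.e (hF : QF F) (hf : Jc f j) (k a b : ℕ) :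
    Good F (fun G v => CF.bit 𝕄 G (v k) (j (v a) (v b))) := by
  refine (Good.ex (F := F) (A := fun G v c => CF.bit 𝕄 G (v k) c ∧
    Vt.pair (Vt.pair (nat (v a)) (nat (v b))) (nat c) ∈ f) ?_).congr fun G _ v => ?_
  · refine (Good.bit hF (k+1) 0).and (Good.dec ⟨fun v => Vt.pair (Vt.pair (v (a+1)) (v (b+1))) (v 0) ∈ f, ?_, fun _ => Iff.rfl⟩)
    exact Dfn.mem' (((DT.var _).pair (DT.var _)).pair (DT.var _)) (DT.const f)
  · constructor
    · rintro ⟨c, hc, h⟩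
      rw [hf.spec, nat_inj] at h
      exact h ▸ hc
    · intro h
      exact ⟨_, h, (hf.spec _ _ _).2 rfl⟩

/-- well-foundedness -/
def WFb (𝕄 : GBModel.{u}) (j : ℕ → ℕ → ℕ) (G : Set ZFSet.{u}) (k : ℕ) : Prop :=
  ∀ l, (∃ a, bit 𝕄 G l a) → ∃ a, bit 𝕄 G l a ∧ ∀ c, bit 𝕄 G l c → ¬ bit 𝕄 G k (j c a)

/-- bisimilarity -/
def EQb (𝕄 : GBModel.{u}) (j : ℕ → ℕ → ℕ) (G : Set ZFSet.{u}) (k a l b : ℕ) : Prop :=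
  ∃ m, bit 𝕄 G m (j a b) ∧ ∀ a b, bit 𝕄 G m (j a b) →
    (∀ c, bit 𝕄 G k (j c a) → ∃ d, bit 𝕄 G l (j d b) ∧ bit 𝕄 G m (j c d)) ∧
    (∀ d, bit 𝕄 G l (j d b) → ∃ c, bit 𝕄 G k (j c a) ∧ bit 𝕄 G m (j c d))

/-- membership up to bisimilarity -/
def MEMb (𝕄 : GBModel.{u}) (j : ℕ → ℕ → ℕ) (G : Set ZFSet.{u}) (k a l b : ℕ) : Prop :=
  ∃ c, bit 𝕄 G l (j c b) ∧ EQb 𝕄 j G k a l c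

theorem Good.wfb (hF : QF F) (hf : Jc f j) (k : ℕ) : Good F (fun G v => WFb 𝕄 j G (v k)) := by
  refine Good.all ((Good.ex ?_).imp (Good.ex (Good.and ?_ (Good.all (Good.imp ?_ (Good.not ?_))))))
  · exact Good.bit hF 1 0
  · exact Good.bit hF 1 0
  · exact Good.bit hF 2 0
  · exact Good.e hF hf (k+3) 0 1

theorem Good.eqb (hF : QF F) (hf : Jc f j) (k a l b : ℕ) :
    Good F (fun G v => EQb 𝕄 j G (v k) (v a) (v l) (v b)) := by
  refine Good.ex (Good.and ?_ (Good.all (Good.all (Good.imp ?_ (Good.and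
    (Good.all (Good.imp ?_ (Good.ex (Good.and ?_ ?_))))
    (Good.all (Good.imp ?_ (Good.ex (Good.and ?_ ?_)))))))))
  · exact Good.e hF hf 0 (a+1) (b+1)
  · exact Good.e hF hf 2 1 0
  · exact Good.e hF hf (k+4) 0 2
  · exact Good.e hF hf (l+5) 0 2
  · exact Good.e hF hf 4 1 0
  · exact Good.e hF hf (l+4) 0 1
  · exact Good.e hF hf (k+5) 0 3
  · exact Good.e hF hf 4 0 1

theorem Good.memb (hF : QF F) (hf : Jc f j) (k a l b : ℕ) :
    Good F (fun G v => MEMb 𝕄 j G (v k) (v a) (v l) (v b)) := by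
  refine Good.ex (Good.and ?_ ?_)
  · exact Good.e hF hf (l+1) 0 (b+1)
  · exact Good.eqb hF hf (k+1) (a+1) (l+1) 0

variable {G : Set ZFSet.{u}}

theorem wfb_iff (hF : QF F) (hf : Jc f j) (hG : Gen F G) {k : ℕ} {r : Vt 𝕄} (hr : GR G k r) :
    WFb 𝕄 j G k ↔ WF f r := by
  constructor
  · rintro h s ⟨a, ha, has⟩
    obtain ⟨l, hl⟩ := hF.gr_surj hG s
    obtain ⟨n, rfl⟩ := mem_omega.1 ha
    obtain ⟨m, hm, h1⟩ := h l ⟨n, (hl n).2 has⟩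
    refine ⟨nat m, ⟨nat_mem_omega m, (hl m).1 hm⟩, fun c hc hcs he => ?_⟩
    obtain ⟨c, rfl⟩ := mem_omega.1 hc
    exact h1 c ((hl c).2 hcs) ((hr _).2 (hf.er_iff.1 he))
  · rintro h l ⟨a, ha⟩
    obtain ⟨s, hs⟩ := hF.gr_exists hG l
    obtain ⟨m, ⟨hm, hms⟩, h1⟩ := h s ⟨nat a, nat_mem_omega a, (hs a).1 ha⟩
    obtain ⟨m, rfl⟩ := mem_omega.1 hm
    refine ⟨m, (hs m).2 hms, fun c hc he => h1 _ (nat_mem_omega c) ((hs c).1 hc) ?_⟩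
    exact hf.er_iff.2 ((hr _).1 he)

/-- `(k,a)` codes `x` in the generic extension -/
def Codes (f : Vt 𝕄) (G : Set ZFSet.{u}) (k a : ℕ) (x : Vt 𝕄) : Prop :=
  ∃ r : Vt 𝕄, GR G k r ∧ WF f r ∧ Col f r (nat a) x

theorem eqb_iff (hF : QF F) (hf : Jc f j) (hG : Gen F G) {k a l b : ℕ} {x y : Vt 𝕄}
    (hx : Codes f G k a x) (hy : Codes f G l b y) : EQb 𝕄 j G k a l b ↔ x = y := by
  obtain ⟨r, hr, _, hx⟩ := hx
  obtain ⟨s, hs, _, hy⟩ := hy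
  rw [col_eq_iff hf hx hy]
  unfold GR at hr hs
  constructor
  · rintro ⟨m, h⟩
    obtain ⟨z, hz⟩ := hF.gr_exists hG m
    unfold GR at hz
    simp only [hr, hs, hz] at h
    exact ⟨z, h⟩
  · rintro ⟨z, h⟩
    obtain ⟨m, hz⟩ := hF.gr_surj hG z
    unfold GR at hz
    refine ⟨m, ?_⟩
    simp only [hr, hs, hz]
    exact h

theorem memb_iff (hF : QF F) (hf : Jc f j) (hG : Gen F G) {k a l b : ℕ} {x y : Vt 𝕄}
    (hx : Codes f G k a x) (hy : Codes f G l b y) : MEMb 𝕄 j G k a l b ↔ x ∈ y := by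
  obtain ⟨s, hs, hw, hy⟩ := hy
  constructor
  · rintro ⟨c, hc, he⟩
    obtain ⟨y', hy', h'⟩ := hy.forth (nat_mem_omega c) (hf.er_iff.2 ((hs _).1 hc))
    rw [eqb_iff hF hf hG hx ⟨s, hs, hw, h'⟩] at he
    exact he ▸ hy'
  · intro h
    obtain ⟨c, hc, he, h'⟩ := hy.back h
    obtain ⟨c, rfl⟩ := mem_omega.1 hc
    exact ⟨c, (hs _).2 (hf.er_iff.1 he), (eqb_iff hF hf hG hx ⟨s, hs, hw, h'⟩).2 rfl⟩

/-- The assignment `u` is coded by `v` (live variables), other variables are the parameters. -/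
def Asg (f : Vt 𝕄) (p : ℕ → Vt 𝕄) (L : Set ℕ) (G : Set ZFSet.{u}) (v : ℕ → ℕ) (w : ℕ → Vt 𝕄) : Prop :=
  (∀ i ∈ L, Codes f G (v (2*i)) (v (2*i+1)) (w i)) ∧ ∀ i, i ∉ L → w i = p i

theorem getpt (hctbl : AllSetsCountable 𝕄) (hF : QF F) (hf : Jc f j) (p : ℕ → Vt 𝕄) (L : Set ℕ) (i : ℕ) :
    ∃ T : Set ZFSet.{u} → (ℕ → ℕ) → ℕ → ℕ → Prop,
      (∀ (g : ℕ → ℕ) c d, Good F (fun G v => T G (fun n => v (g n)) (v c) (v d))) ∧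
      ∀ G, Gen F G → ∀ v w, Asg f p L G v w →
        (∃ k a, T G v k a) ∧ ∀ k a, T G v k a → Codes f G k a (w i) := by
  by_cases hi : i ∈ L
  · refine ⟨fun G v k a => k = v (2*i) ∧ a = v (2*i+1), fun g c d => ?_, fun G hG v w h => ?_⟩
    · exact (Good.eq c (g (2*i))).and (Good.eq d (g (2*i+1)))
    · refine ⟨⟨_, _, rfl, rfl⟩, ?_⟩
      rintro k a ⟨rfl, rfl⟩
      exact h.1 i hi
  · obtain ⟨r, n, hr, hn⟩ := exists_code hctbl hf (p i)
    refine ⟨fun G v k a => GR G k r ∧ a = n, fun g c d => ?_, fun G hG v w h => ?_⟩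
    · refine Good.and (Good.all (Good.iff ?_ ?_)) (Good.eqc d n)
      · exact Good.bit hF (c+1) 0
      · exact Good.memc 0 r
    · obtain ⟨k, hk⟩ := hF.gr_surj hG r
      refine ⟨⟨k, n, hk, rfl⟩, ?_⟩
      rintro k a ⟨h1, rfl⟩
      rw [h.2 i hi]
      exact ⟨r, h1, hr, hn⟩

theorem translate (hctbl : AllSetsCountable 𝕄) (hF : QF F) (hf : Jc f j) (p : ℕ → Vt 𝕄) (φ : EFormula) :
    ∀ L : Set ℕ, ∃ A : Set ZFSet.{u} → (ℕ → ℕ) → Prop, Good F A ∧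
      ∀ G, Gen F G → ∀ v w, Asg f p L G v w →
        (A G v ↔ EFormula.Sat 𝕄.M (fun n => (w n).1) φ) := by
  induction φ with
  | mem i i' =>
    intro L
    obtain ⟨T, hT, h1⟩ := getpt hctbl hF hf p L i
    obtain ⟨T', hT', h1'⟩ := getpt hctbl hF hf p L i'
    refine ⟨fun G v => ∃ k a l b, (T G v k a ∧ T' G v l b) ∧ MEMb 𝕄 j G k a l b, ?_, fun G hG v w h => ?_⟩
    · refine Good.ex (Good.ex (Good.ex (Good.ex (Good.and (Good.and ?_ ?_) ?_))))
      · exact hT (fun n => n+4) 3 2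
      · exact hT' (fun n => n+4) 1 0
      · exact Good.memb hF hf 3 2 1 0
    · obtain ⟨⟨k, a, h2⟩, h3⟩ := h1 G hG v w h
      obtain ⟨⟨l, b, h2'⟩, h3'⟩ := h1' G hG v w h
      constructor
      · rintro ⟨k, a, l, b, ⟨h4, h5⟩, h6⟩
        exact (memb_iff hF hf hG (h3 _ _ h4) (h3' _ _ h5)).1 h6
      · intro h4
        exact ⟨k, a, l, b, ⟨h2, h2'⟩, (memb_iff hF hf hG (h3 _ _ h2) (h3' _ _ h2')).2 h4⟩
  | eq i i' =>
    intro L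
    obtain ⟨T, hT, h1⟩ := getpt hctbl hF hf p L i
    obtain ⟨T', hT', h1'⟩ := getpt hctbl hF hf p L i'
    refine ⟨fun G v => ∃ k a l b, (T G v k a ∧ T' G v l b) ∧ EQb 𝕄 j G k a l b, ?_, fun G hG v w h => ?_⟩
    · refine Good.ex (Good.ex (Good.ex (Good.ex (Good.and (Good.and ?_ ?_) ?_))))
      · exact hT (fun n => n+4) 3 2
      · exact hT' (fun n => n+4) 1 0
      · exact Good.eqb hF hf 3 2 1 0
    · obtain ⟨⟨k, a, h2⟩, h3⟩ := h1 G hG v w h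
      obtain ⟨⟨l, b, h2'⟩, h3'⟩ := h1' G hG v w h
      constructor
      · rintro ⟨k, a, l, b, ⟨h4, h5⟩, h6⟩
        exact congrArg _ ((eqb_iff hF hf hG (h3 _ _ h4) (h3' _ _ h5)).1 h6)
      · intro h4
        exact ⟨k, a, l, b, ⟨h2, h2'⟩, (eqb_iff hF hf hG (h3 _ _ h2) (h3' _ _ h2')).2 (Vt.val_inj h4)⟩
  | not φ ih =>
    intro L
    obtain ⟨A, hA, h⟩ := ih L
    exact ⟨_, hA.not, fun G hG v w hw => not_congr (h G hG v w hw)⟩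
  | or φ ψ ih1 ih2 =>
    intro L
    obtain ⟨A, hA, h⟩ := ih1 L
    obtain ⟨B, hB, h'⟩ := ih2 L
    exact ⟨_, hA.or hB, fun G hG v w hw => or_congr (h G hG v w hw) (h' G hG v w hw)⟩
  | ex i φ ih =>
    intro L
    obtain ⟨A, hA, h⟩ := ih (insert i L)
    refine ⟨fun G v => ∃ k a, WFb 𝕄 j G k ∧
      A G (fun n => if n = 2*i then k else if n = 2*i+1 then a else v n), ?_, fun G hG v w hw => ?_⟩
    · refine Good.ex (Good.ex (Good.and (Good.wfb hF hf 1) ?_))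
      refine (hA.rename (fun n => if n = 2*i then 1 else if n = 2*i+1 then 0 else n+2)).congr fun G _ v => ?_
      apply iff_of_eq
      congr 1
      funext n
      split
      · rfl
      · split <;> rfl
    · have key : ∀ k a (x : Vt 𝕄), Codes f G k a x →
          (A G (fun n => if n = 2*i then k else if n = 2*i+1 then a else v n) ↔
            EFormula.Sat 𝕄.M (Function.update (fun n => (w n).1) i x.1) φ) := by
        intro k a x hx
        have e : Function.update (fun n => (w n).1) i x.1 = fun n => (Function.update w i x n).1 := by
          funext n
          by_cases hn : n = i
          · subst hn
            simp
          · simp [hn]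
        rw [e]
        apply h G hG
        refine ⟨fun l hl => ?_, fun l hl => ?_⟩
        · by_cases hn : l = i
          · subst hn
            simpa using hx
          · have := hw.1 l (hl.resolve_left hn)
            have e1 : ¬ 2*l = 2*i := by omega
            have e2 : ¬ 2*l = 2*i+1 := by omega
            have e3 : ¬ 2*l+1 = 2*i := by omega
            have e4 : ¬ 2*l+1 = 2*i+1 := by omega
            simpa only [e1, e2, e3, e4, if_false, Function.update_of_ne hn] using this
        · have hn : l ≠ i := fun e => hl (Or.inl e)
          rw [Function.update_of_ne hn]
          exact hw.2 l fun e => hl (Or.inr e)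
      constructor
      · rintro ⟨k, a, h1, h2⟩
        obtain ⟨r, hr⟩ := hF.gr_exists hG k
        have hwf := (wfb_iff hF hf hG hr).1 h1
        obtain ⟨x, hx⟩ := hwf.col_exists (nat a) (nat_mem_omega a)
        exact ⟨x.1, x.2, (key k a x ⟨r, hr, hwf, hx⟩).1 h2⟩
      · rintro ⟨x, hx, h2⟩
        obtain ⟨r, n, hr, hn⟩ := exists_code hctbl hf ⟨x, hx⟩
        obtain ⟨k, hk⟩ := hF.gr_surj hG r
        exact ⟨k, n, (wfb_iff hF hf hG hk).2 hr, (key k n ⟨x, hx⟩ ⟨r, hk, hr, hn⟩).2 h2⟩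

end Translation

section Diagonal
variable {𝕄 : GBModel.{u}} {F : ClassForcing 𝕄} {f : Vt 𝕄} {j : ℕ → ℕ → ℕ}

/-! ### The diagonal argument -/

/-- `q` determines a code of `x` in its first two coordinates -/
def CodeCond (f q x : Vt 𝕄) : Prop := ∃ c n, (n ∈ Vt.omega ∧ WF f c ∧ Col f c n x) ∧
  Vt.pair (nat 0) (chi c) ∈ q ∧ Vt.pair (nat 1) (chi (Vt.upair n n)) ∈ q

theorem Dfn.codeCond (f : Vt 𝕄) (i k : ℕ) : Dfn 𝕄 (fun v => CodeCond f (v i) (v k)) := by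
  refine Dfn.ex (Dfn.ex (Dfn.and ((Dfn.inom 0).and ((Dfn.wf f 1).and (Dfn.col f 1 0 (k+2)))) (Dfn.and ?_ ?_)))
  · exact Dfn.mem' ((DT.const (nat 0)).pair (DT.var 1).chi) (DT.var (i+2))
  · exact Dfn.mem' ((DT.const (nat 1)).pair ((DT.var 0).upair (DT.var 0)).chi) (DT.var (i+2))

theorem exists_codeCond (hctbl : AllSetsCountable 𝕄) (hF : QF F) (hf : Jc f j) (x : Vt 𝕄) :
    ∃ q : Vt 𝕄, q.1 ∈ F.P ∧ CodeCond f q x := by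
  obtain ⟨r, n, hr, hn⟩ := exists_code hctbl hf x
  refine ⟨enc (fun i => if i = 0 then chi r else chi (Vt.upair (nat n) (nat n))) 2, hF.enc_mem ?_,
    r, nat n, ⟨nat_mem_omega n, hr, hn⟩, ?_, ?_⟩
  · intro i _
    split
    · exact pc_chi _
    · exact pc_chi _
  · exact pair_mem_enc.2 ⟨by norm_num, by simp⟩
  · exact pair_mem_enc.2 ⟨by norm_num, by simp⟩

theorem forces_eq {q ν μ : Vt 𝕄} :
    Forces 𝕄 F (EFormula.eq 0 1) 2 q.1 ![ν.1, μ.1] ↔ ∀ G, Gen F G → q.1 ∈ G → ev G ν = ev G μ :=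
  Iff.rfl

theorem diagonal (hdef : ∀ X : Set ZFSet.{u}, X ∈ 𝕄.Cls ↔ DefinableOver 𝕄.M X)
    (hctbl : AllSetsCountable 𝕄) (hF : QF F) : ¬ SatisfiesForcingTheorem 𝕄 F := by
  intro hft
  obtain ⟨f, j, hf⟩ := exists_Jc hctbl
  have hC := (hft (EFormula.eq 0 1) 2 ⟨by norm_num, by norm_num⟩).1
  set C := {x : ZFSet.{u} | ∃ p ∈ F.P, ∃ σs : Fin 2 → ZFSet.{u},
        (∀ i, σs i ∈ 𝕄.M ∧ IsName F.P (σs i)) ∧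
        Forces 𝕄 F (EFormula.eq 0 1) 2 p σs ∧
        x = p.pair (listEncode (List.ofFn σs))} with hCdef
  have hCmem : ∀ q ν μ : Vt 𝕄, q.1 ∈ F.P → Name F ν → Name F μ →
      ((Vt.pair q (Vt.pair ν (Vt.pair μ Vt.empty))).1 ∈ C ↔
        ∀ G, Gen F G → q.1 ∈ G → ev G ν = ev G μ) := by
    intro q ν μ hq hν hμ
    rw [Vt.pair_val, Vt.pair_val, Vt.pair_val]
    constructor
    · rintro ⟨p, hp, σs, h1, h2, h3⟩
      simp only [List.ofFn_succ, List.ofFn_zero, listEncode, ZFSet.pair_inj] at h3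
      obtain ⟨e1, e2, e3, -⟩ := h3
      subst e1
      intro G hG hqG
      have h4 : nameEval G (σs 0) = nameEval G (σs 1) := h2 G hG hqG
      rw [ev, ev, e2, e3]
      exact h4
    · intro h
      refine ⟨q.1, hq, ![ν.1, μ.1], ?_, forces_eq.2 h, ?_⟩
      · intro i
        fin_cases i
        · exact ⟨ν.2, hν⟩
        · exact ⟨μ.2, hμ⟩
      · simp [List.ofFn_succ, listEncode, Vt.empty]
  have hX : Dfn 𝕄 (fun v => ∀ q : Vt 𝕄, q.1 ∈ F.P → ∀ ν μ, v 0 = Vt.pair ν μ → CodeCond f q (v 0) →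
      ¬ (Vt.pair q (Vt.pair ν (Vt.pair μ Vt.empty))).1 ∈ C) := by
    refine Dfn.all (Dfn.imp (Dfn.cls' F.P_cls (DT.var 0)) (Dfn.all (Dfn.all (Dfn.imp ?_ (Dfn.imp ?_ (Dfn.not ?_))))))
    · exact Dfn.eq' (DT.var 3) ((DT.var 1).pair (DT.var 0))
    · exact Dfn.codeCond f 2 3
    · exact Dfn.cls' hC ((DT.var 2).pair ((DT.var 1).pair ((DT.var 0).pair (DT.const _))))
  obtain ⟨φ, p, hp, hXφ⟩ := (hdef _).1 (hX.mem_cls (fun _ => nat 0))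
  have hXiff : ∀ x : Vt 𝕄, (∀ q : Vt 𝕄, q.1 ∈ F.P → ∀ ν μ, x = Vt.pair ν μ → CodeCond f q x →
      ¬ (Vt.pair q (Vt.pair ν (Vt.pair μ Vt.empty))).1 ∈ C) ↔
      EFormula.Sat 𝕄.M (Function.update p 0 x.1) φ := by
    intro x
    have := Set.ext_iff.1 hXφ x.1
    constructor
    · intro h
      exact (this.1 ⟨x.2, h⟩).2
    · intro h
      obtain ⟨_, h'⟩ := this.2 ⟨x.2, h⟩
      exact h'
  obtain ⟨A, hA, hAφ⟩ := translate hctbl hF hf (fun n => ⟨p n, hp n⟩) φ {0}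
  have hB : Good F (fun G v => ∃ n, bit 𝕄 G (v 1) n ∧ A G (fun m => if m = 1 then n else v 0)) := by
    refine Good.ex (Good.and (Good.bit hF 2 0) ?_)
    refine (hA.rename (fun m => if m = 1 then 0 else 1)).congr fun G _ v => ?_
    apply iff_of_eq
    congr 1
    funext n
    split <;> rfl
  obtain ⟨⟨α, β, _, _, hn, hαβ⟩, _⟩ := hB
  set v0 : ℕ → ℕ := fun m => if m = 1 then 1 else 0 with hv0
  obtain ⟨ν, hν⟩ : ∃ ν, ν = α (nv v0) := ⟨_, rfl⟩
  obtain ⟨μ, hμ⟩ : ∃ μ, μ = β (nv v0) := ⟨_, rfl⟩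
  have hnν : Name F ν := hν ▸ (hn v0).1
  have hnμ : Name F μ := hμ ▸ (hn v0).2
  have key : ∀ (q : Vt 𝕄) G, Gen F G → q.1 ∈ G → CodeCond f q (Vt.pair ν μ) →
      (ev G ν = ev G μ ↔ EFormula.Sat 𝕄.M (Function.update p 0 (Vt.pair ν μ).1) φ) := by
    rintro q G hG hqG ⟨c, n, ⟨hnω, hc, hcol⟩, h0, h1⟩
    obtain ⟨n, rfl⟩ := mem_omega.1 hnω
    have g0 := hF.gr_of_mem hG hqG h0
    have g1 := hF.gr_of_mem hG hqG h1
    have g1' : ∀ m, bit 𝕄 G 1 m ↔ m = n := by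
      intro m
      rw [g1 m, Vt.mem_upair, or_self, nat_inj]
    rw [hν, hμ, ← hαβ G hG v0, ← hν, ← hμ]
    have hcodes : Codes f G 0 n (Vt.pair ν μ) := ⟨c, g0, hc, hcol⟩
    have := hAφ G hG (fun m => if m = 1 then n else 0)
      (Function.update (fun n => ⟨p n, hp n⟩) 0 (Vt.pair ν μ)) (by
        refine ⟨?_, ?_⟩
        · rintro i rfl
          simpa using hcodes
        · intro i hi
          exact Function.update_of_ne hi _ _)
    have e : Function.update p 0 (Vt.pair ν μ).1 =
        fun n => (Function.update (fun n => (⟨p n, hp n⟩ : Vt 𝕄)) 0 (Vt.pair ν μ) n).1 := by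
      funext n
      by_cases hn : n = 0
      · subst hn
        simp
      · simp [hn]
    rw [e, ← this]
    constructor
    · rintro ⟨m, hm, h⟩
      rw [(g1' m).1 hm] at h
      exact h
    · intro h
      exact ⟨n, (g1' n).2 rfl, h⟩
  by_cases hx : EFormula.Sat 𝕄.M (Function.update p 0 (Vt.pair ν μ).1) φ
  · obtain ⟨q, hq, hqc⟩ := exists_codeCond hctbl hF hf (Vt.pair ν μ)
    refine (hXiff _).2 hx q hq ν μ rfl hqc ?_
    rw [hCmem q ν μ hq hnν hnμ]
    intro G hG hqG
    exact (key q G hG hqG hqc).2 hx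
  · apply hx
    have h1 := mt (hXiff (Vt.pair ν μ)).1 hx
    push Not at h1
    obtain ⟨q, hq, ν', μ', e, hqc, h2⟩ := h1
    obtain ⟨rfl, rfl⟩ := Vt.pair_inj.1 e
    rw [hCmem q ν μ hq hnν hnμ] at h2
    obtain ⟨G, hG, hqG⟩ := exists_gen F hq
    exact (key q G hG hqG hqc).1 (h2 G hG hqG)

end Diagonal

/-- Over a countable transitive model `M ⊨ ZF⁻` in which every set is countable
(with `𝒞` the definable classes), the finite support product `ℚ` of `ω` many copies of the
forcing with infinite partial functions `ω → 2` does not satisfy the forcing theorem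
over `𝕄 = ⟨M, 𝒞⟩`. -/
theorem product_fails_forcing_theorem
    (𝕄 : GBModel)
    (hdef : ∀ X : Set ZFSet, X ∈ 𝕄.Cls ↔ DefinableOver 𝕄.M X)
    (hctbl : AllSetsCountable 𝕄)
    (F : ClassForcing 𝕄)
    (hP : F.P = {s : ZFSet | QCond 𝕄 s})
    (hle : ∀ s' ∈ F.P, ∀ s ∈ F.P, (F.le s' s ↔ QLe s' s)) :
    ¬ SatisfiesForcingTheorem 𝕄 F := by
  exact diagonal hdef hctbl ⟨hP, hle⟩

end CF
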